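/- arXiv:0911.2884 — 3 statements merged into one kernel-verified Lean document; each statement's English description precedes it below -/
import Mathlib

section
/- Let n ≥ 3 and I = (L(u,v)) ⊂ S = K[x_1,…,x_n] be the final lexsegment edge ideal determined by u = x_1 x_i with 3 ≤ i ≤ n and v = x_{n-1}x_n. Then the Krull dimension of S/I is 2. -/
/-!
The dimension of `S/I` is the largest dimension of `S/P` over primes `P ⊇ I`
(`ringKrullDim_quotient_le_of_forall_prime`).

Every product `x_a x_b` with `2 ≤ a < b` lies in `I`, so a prime `P ⊇ I` contains all but at most
one of `x_2, …, x_n`. Hence `S/P` is generated as a `K`-algebra by the classes of `x_1` and a single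
further variable `x_b`, and is a quotient of a polynomial ring in two variables: `dim S/P ≤ 2`.

Conversely `x_1 x_2 ∉ L(u,v)` because `i ≥ 3`, so killing `x_3, …, x_n` induces a surjection from
`S/I` onto `K[x_1, x_2]`, which has dimension `2`.
-/

open MvPolynomial

/-- The variable `x_i` (1-based indexing) of `K[x_1,…,x_n]`. -/
noncomputable def xv (K : Type) [Field K] (n i : ℕ) : MvPolynomial (Fin n) K :=
  if h : i - 1 < n then MvPolynomial.X ⟨i - 1, h⟩ else 0

/-- `lexGE p q` : for sorted index pairs, the squarefree degree-2 monomial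
`x_{p.1} x_{p.2}` is greater than or equal to `x_{q.1} x_{q.2}` in the
lexicographic order induced by `x_1 > x_2 > ⋯ > x_n`. -/
def lexGE (p q : ℕ × ℕ) : Prop := p.1 < q.1 ∨ (p.1 = q.1 ∧ p.2 ≤ q.2)

/-- Strict lexicographic comparison of sorted index pairs. -/
def lexGT (p q : ℕ × ℕ) : Prop := p.1 < q.1 ∨ (p.1 = q.1 ∧ p.2 < q.2)

/-- Sorted index pairs in range `1,…,n`; these correspond exactly to the
squarefree monomials of degree 2 of `K[x_1,…,x_n]`. -/
def validPair (n : ℕ) (p : ℕ × ℕ) : Prop := 1 ≤ p.1 ∧ p.1 < p.2 ∧ p.2 ≤ n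

/-- The lexsegment set `L(u,v)`, as a set of sorted index pairs. -/
def lexSegSet (n : ℕ) (u v : ℕ × ℕ) : Set (ℕ × ℕ) :=
  {w | validPair n w ∧ lexGE u w ∧ lexGE w v}

/-- The lexsegment edge ideal `I = (L(u,v)) ⊆ K[x_1,…,x_n]`. -/
noncomputable def lexSegIdeal (K : Type) [Field K] (n : ℕ) (u v : ℕ × ℕ) :
    Ideal (MvPolynomial (Fin n) K) :=
  Ideal.span ((fun w : ℕ × ℕ => xv K n w.1 * xv K n w.2) '' lexSegSet n u v)

/-- The Alexander dual of the lexsegment edge ideal `(L(u,v))`: the intersection,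
over the (minimal) monomial generators `x_p x_q` with `(p,q) ∈ L(u,v)`, of the
prime ideals `(x_p, x_q)`. -/
noncomputable def lexSegAlexDual (K : Type) [Field K] (n : ℕ) (u v : ℕ × ℕ) :
    Ideal (MvPolynomial (Fin n) K) :=
  ⨅ w ∈ lexSegSet n u v, Ideal.span {xv K n w.1, xv K n w.2}

/-- The arithmetical rank of an ideal: the least `r` such that some `r` elements
of `J` generate an ideal with the same radical as `J`. -/
noncomputable def ara {R : Type} [CommRing R] (J : Ideal R) : ℕ :=
  sInf {r : ℕ | ∃ f : Fin r → R, (∀ t, f t ∈ J) ∧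
    (Ideal.span (Set.range f)).radical = J.radical}

/-- The projective dimension of a module `M`: the least `d` admitting a projective
resolution vanishing in homological degrees `> d`. -/
noncomputable def projDim {R : Type} [CommRing R] (M : ModuleCat R) : ℕ :=
  sInf {d : ℕ | ∃ P : CategoryTheory.ProjectiveResolution M,
    ∀ i : ℕ, d < i → CategoryTheory.Limits.IsZero (P.complex.X i)}

/-- The depth of `S/I` with respect to the graded maximal ideal `(x_1,…,x_n)`:
the longest length of a regular sequence on `S/I` consisting of elements of
`(x_1,…,x_n)`. -/
noncomputable def smDepth (K : Type) [Field K] (n : ℕ)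
    (I : Ideal (MvPolynomial (Fin n) K)) : ℕ :=
  sSup {r : ℕ | ∃ rs : List (MvPolynomial (Fin n) K), rs.length = r ∧
    (∀ a ∈ rs, a ∈ Ideal.span
      (Set.range (MvPolynomial.X : Fin n → MvPolynomial (Fin n) K))) ∧
    RingTheory.Sequence.IsRegular (MvPolynomial (Fin n) K ⧸ I) rs}

/-- The height of an ideal: the infimum of the heights of the primes containing it. -/
noncomputable def idealHeight {R : Type} [CommRing R] (I : Ideal R) : ℕ∞ :=
  ⨅ p ∈ {p : PrimeSpectrum R | I ≤ p.asIdeal}, Order.height p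

/-- `m` is a monomial of `K[x_1,…,x_n]`. -/
def IsMonomial {K : Type} [Field K] {n : ℕ} (m : MvPolynomial (Fin n) K) : Prop :=
  ∃ s : Fin n →₀ ℕ, m = MvPolynomial.monomial s 1

/-- `m` is a squarefree monomial of `K[x_1,…,x_n]`. -/
def IsSqFreeMonomial {K : Type} [Field K] {n : ℕ} (m : MvPolynomial (Fin n) K) : Prop :=
  ∃ t : Finset (Fin n), m = t.prod (fun i => MvPolynomial.X i)

/-- `m` is a minimal monomial generator of the monomial ideal `I`: a monomial of `I`
divisible by no monomial of `I` other than itself. -/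
def IsMinimalMonomialGen {K : Type} [Field K] {n : ℕ}
    (I : Ideal (MvPolynomial (Fin n) K)) (m : MvPolynomial (Fin n) K) : Prop :=
  IsMonomial m ∧ m ∈ I ∧
    ∀ m', IsMonomial m' → m' ∈ I → m' ∣ m → m' = m

lemma ringKrullDim_quotient_le_of_forall_prime {R : Type*} [CommRing R] (I : Ideal R)
    (d : WithBot ℕ∞)
    (h : ∀ P : Ideal R, P.IsPrime → I ≤ P → ringKrullDim (R ⧸ P) ≤ d) :
    ringKrullDim (R ⧸ I) ≤ d := by
  rw [ringKrullDim_quotient, Order.krullDim_eq_iSup_coheight]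
  refine iSup_le fun x => ?_
  -- A chain of primes above `x` is a chain of primes of `R ⧸ x`.
  rw [Order.coheight_eq_krullDim_Ici]
  refine le_trans ?_ (h x.1.asIdeal x.1.isPrime x.2)
  rw [ringKrullDim_quotient]
  exact Order.krullDim_le_of_strictMono
    (fun y : Set.Ici x => (⟨y.1.1, y.2⟩ : PrimeSpectrum.zeroLocus (x.1.asIdeal : Set R)))
    (fun _ _ hab => hab)

lemma ringKrullDim_mvPolynomial_fin_two (K : Type) [Field K] :
    ringKrullDim (MvPolynomial (Fin 2) K) = 2 := by
  rw [MvPolynomial.ringKrullDim_of_isNoetherianRing, ringKrullDim_eq_zero_of_field]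
  simp

/-- `S/P` is generated as a `K`-algebra by the classes of `x_a` and `x_b`, the only variables that
need not vanish in it. -/
lemma ringKrullDim_quotient_le_two {σ K : Type} [Field K] (P : Ideal (MvPolynomial σ K))
    (a b : σ) (h : ∀ j, j ≠ a → j ≠ b → (X j : MvPolynomial σ K) ∈ P) :
    ringKrullDim (MvPolynomial σ K ⧸ P) ≤ 2 := by
  let f : MvPolynomial (Fin 2) K →ₐ[K] MvPolynomial σ K ⧸ P :=
    aeval ![Ideal.Quotient.mk P (X a), Ideal.Quotient.mk P (X b)]
  have hX : ∀ j, Ideal.Quotient.mkₐ K P (X j) ∈ f.range := by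
    intro j
    by_cases ha : j = a
    · exact ⟨X 0, by simp [f, ha]⟩
    by_cases hb : j = b
    · exact ⟨X 1, by simp [f, hb]⟩
    · have : Ideal.Quotient.mkₐ K P (X j) = 0 := Ideal.Quotient.eq_zero_iff_mem.2 (h j ha hb)
      rw [this]
      exact zero_mem _
  have hf : Function.Surjective f := by
    intro q
    obtain ⟨p, rfl⟩ := Ideal.Quotient.mkₐ_surjective K P q
    change _ ∈ f.range
    induction p using MvPolynomial.induction_on with
    | C c => exact f.range.algebraMap_mem c
    | add p q hp hq => rw [map_add]; exact add_mem hp hq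
    | mul_X p j hp => rw [map_mul]; exact mul_mem hp (hX j)
  exact (ringKrullDim_le_of_surjective f.toRingHom hf).trans
    (ringKrullDim_mvPolynomial_fin_two K).le

/-- The edges `x_{a+1} x_{b+1}` with `1 ≤ a < b` all lie in the final lexsegment ideal
(the indices of `Fin n` are `0`-based). -/
lemma X_mul_X_mem_lexSegIdeal (K : Type) [Field K] {n : ℕ} (i : ℕ) (a b : Fin n)
    (ha : 0 < a.1) (hab : a < b) :
    (X a * X b : MvPolynomial (Fin n) K) ∈ lexSegIdeal K n (1, i) (n - 1, n) := by
  have hab' : a.1 < b.1 := hab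
  refine Ideal.subset_span ⟨(a.1 + 1, b.1 + 1), ?_, ?_⟩
  · simp only [lexSegSet, validPair, lexGE, Set.mem_ofPred_eq]
    omega
  · simp [xv]

/-- For `n ≥ 3`, the final lexsegment edge ideal
`I = (L(x_1 x_i, x_{n-1} x_n))` with `3 ≤ i ≤ n` has `dim(S/I) = 2`. -/
theorem final_lexSegIdeal_dim (K : Type) [Field K] (n i : ℕ) (hn : 3 ≤ n)
    (hi3 : 3 ≤ i) (hin : i ≤ n) :
    ringKrullDim (MvPolynomial (Fin n) K ⧸ lexSegIdeal K n (1, i) (n - 1, n)) = 2 := by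
  refine le_antisymm ?_ ?_
  · refine ringKrullDim_quotient_le_of_forall_prime _ _ fun P hP hIP => ?_
    have key : ∀ j k : Fin n, 0 < j.1 → 0 < k.1 → j ≠ k →
        (X j : MvPolynomial (Fin n) K) ∈ P ∨ (X k : MvPolynomial (Fin n) K) ∈ P := by
      intro j k hj hk hjk
      rcases lt_or_gt_of_ne hjk with h | h
      · exact hP.mem_or_mem (hIP (X_mul_X_mem_lexSegIdeal K i j k hj h))
      · exact (hP.mem_or_mem (hIP (X_mul_X_mem_lexSegIdeal K i k j hk h))).symm
    have pos : ∀ j : Fin n, j ≠ ⟨0, by omega⟩ → 0 < j.1 := fun j hj =>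
      Nat.pos_of_ne_zero fun h => hj (Fin.ext h)
    by_cases hb : ∃ b : Fin n, 0 < b.1 ∧ (X b : MvPolynomial (Fin n) K) ∉ P
    · obtain ⟨b, hb0, hb⟩ := hb
      exact ringKrullDim_quotient_le_two P ⟨0, by omega⟩ b fun j hj hjb =>
        (key j b (pos j hj) hb0 hjb).resolve_right hb
    · push Not at hb
      exact ringKrullDim_quotient_le_two P ⟨0, by omega⟩ ⟨0, by omega⟩ fun j hj _ =>
        hb j (pos j hj)
  · let g : MvPolynomial (Fin n) K →ₐ[K] MvPolynomial (Fin 2) K :=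
      aeval fun j => if h : j.1 < 2 then X ⟨j.1, h⟩ else 0
    have hg : ∀ p ∈ lexSegIdeal K n (1, i) (n - 1, n), g.toRingHom p = 0 := by
      intro p hp
      have hle : lexSegIdeal K n (1, i) (n - 1, n) ≤ RingHom.ker g.toRingHom := by
        refine Ideal.span_le.2 ?_
        rintro _ ⟨⟨a, b⟩, hw, rfl⟩
        simp only [lexSegSet, validPair, lexGE, Set.mem_ofPred_eq] at hw
        -- The larger index `b` is at least `3`: if `a = 1` then `b ≥ i ≥ 3`, else `b > a ≥ 2`.
        have hb : 2 < b := by omega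
        have hbn : b - 1 < n := by omega
        have hxb : g (xv K n b) = 0 := by simp [g, xv, hbn, hb]
        change g (xv K n a * xv K n b) = 0
        rw [map_mul, hxb, mul_zero]
      exact hle hp
    have hsurj : Function.Surjective g := by
      have hr : g.comp (rename (Fin.castLE (by omega : 2 ≤ n))) = AlgHom.id K _ := by
        ext j : 1
        simp [g, show (j : ℕ) ≤ 1 by omega]
      exact fun q => ⟨_, DFunLike.congr_fun hr q⟩
    rw [← ringKrullDim_mvPolynomial_fin_two K]
    exact ringKrullDim_le_of_surjective (Ideal.Quotient.lift _ g.toRingHom hg)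
      (Ideal.Quotient.lift_surjective_of_surjective _ hg hsurj)
end

section
/- Let I = (L(u,v)) ⊂ S = K[x_1,…,x_n] be a lexsegment edge ideal determined by u = x_1 x_i with 3 ≤ i ≤ n and v = x_j x_k with 2 ≤ j < k ≤ n, where u >_lex v. Then depth(S/I) = 1 if and only if x_{i-1}x_n ≥_lex v. -/
/-!
The ideal is the edge ideal `I(G)` of a graph `G` on `{1,…,n}`, and for every graph on at least two
vertices `depth S/I(G) = 1` holds exactly when the complement `Gᶜ`, which is the 1-skeleton of
the independence complex, is disconnected (`smDepth_edgeIdeal_eq_one_iff`). The index condition of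
the theorem is then a statement about components of `Gᶜ`: `1, …, i-1` always lie in one component,
and that component is proper precisely when `x_{i-1} x_n ≥ x_j x_k`.

Everything about `I(G)` is read off monomial by monomial: `p ∈ I(G)` iff `p` has zero coefficient
at every monomial supported on an independent set (`mem_edgeIdeal`). In particular `p ∈ I(G)` as
soon as all `x_a p` are in `I(G)`, so prime avoidance (`exists_regular`) gives an element of
`𝔪 = (x_1,…,x_n)` that is regular on `S/I(G)`, and the depth is at least one.

*Disconnected complement.* Let `A ⊔ B` be a partition of the vertices with all `A`–`B` pairs edges
of `G`. Split `f, g ∈ 𝔪` as `f = f_A + f_B`, `g = g_A + g_B` along `𝔪 = (x_A) + (x_B)`. Modulo `I`,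
mixed products vanish, hence `g f_A = f g_A`. If `f, g` were a regular sequence this would force
`f_A = f h`, so `(1 - h) f_A = h f_B`, so `x_a (1 - h)` and `x_b h` are killed by `f` for `a ∈ A`,
`b ∈ B`; then both `1 - h` and `h` have zero constant term, which is absurd
(`not_regular_pair`).

*Connected complement.* Let `f ∈ 𝔪` be regular on `S/I`. If `𝔪 p ⊆ I + (f)`, write
`x_a p = f h_a` modulo `I`. Cancelling `f` gives the cocycle condition `x_b h_a = x_a h_b`, and
connectedness of `Gᶜ` provides `q` with `h_a = x_a q` for all `a` (`exists_lift_of_cocycle`), so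
`p = f q`. Prime avoidance on `S/(I + (f))` now extends `f` to a regular sequence of length two.
-/

open MvPolynomial

/-! ### Regular elements on quotients of polynomial rings -/

section Regular

open scoped Pointwise

variable {K : Type} [Field K] {n : ℕ}

lemma isSMulRegular_quot_iff (I : Ideal (MvPolynomial (Fin n) K)) (f : MvPolynomial (Fin n) K) :
    IsSMulRegular (MvPolynomial (Fin n) K ⧸ I) f ↔ ∀ p, f * p ∈ I → p ∈ I :=
  isSMulRegular_quotient_iff_mem_of_smul_mem I f

lemma isSMulRegular_quotSMulTop_iff (I : Ideal (MvPolynomial (Fin n) K))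
    (f g : MvPolynomial (Fin n) K) :
    IsSMulRegular (QuotSMulTop f (MvPolynomial (Fin n) K ⧸ I)) g ↔
      ∀ p, (∃ q, g * p - f * q ∈ I) → ∃ q, p - f * q ∈ I := by
  have key : ∀ p : MvPolynomial (Fin n) K,
      (Submodule.mkQ I p) ∈
        (f • (⊤ : Submodule (MvPolynomial (Fin n) K) (MvPolynomial (Fin n) K ⧸ I))) ↔
      ∃ q, p - f * q ∈ I := by
    intro p
    rw [Submodule.mem_smul_pointwise_iff_exists]
    constructor
    · rintro ⟨b, -, hb⟩
      obtain ⟨q, rfl⟩ := Submodule.mkQ_surjective I b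
      refine ⟨q, ?_⟩
      rw [← map_smul] at hb
      exact (Submodule.Quotient.eq I).mp hb.symm
    · rintro ⟨q, hq⟩
      refine ⟨Submodule.mkQ I q, trivial, ?_⟩
      rw [← map_smul]
      exact ((Submodule.Quotient.eq I).mpr hq).symm
  refine (isSMulRegular_quotient_iff_mem_of_smul_mem _ g).trans ?_
  refine (Submodule.mkQ_surjective I).forall.trans (forall_congr' fun p => ?_)
  rw [← map_smul, key, key, smul_eq_mul]

/-- Prime avoidance: if the maximal ideal `(x_1,…,x_n)` does not annihilate any nonzero element
of `S/J`, then it contains an element that is regular on `S/J`. -/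
lemma exists_regular (J : Ideal (MvPolynomial (Fin n) K))
    (hJ : ∀ p, (∀ a, X a * p ∈ J) → p ∈ J) :
    ∃ f ∈ idealOfVars (Fin n) K, ∀ p, f * p ∈ J → p ∈ J := by
  by_contra! H
  have hsub : ((idealOfVars (Fin n) K : Ideal _) : Set (MvPolynomial (Fin n) K)) ⊆
      ⋃ P ∈ associatedPrimes (MvPolynomial (Fin n) K) (MvPolynomial (Fin n) K ⧸ J), P := by
    rw [biUnion_associatedPrimes_eq_compl_regular]
    intro f hf hreg
    obtain ⟨p, hp, hp'⟩ := H f hf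
    exact hp' ((isSMulRegular_quot_iff J f).mp hreg p hp)
  obtain ⟨P, hP, hle⟩ := (Ideal.subset_union_prime_finite (f := id)
    (associatedPrimes.finite _ _) ⊥ ⊥ (fun P hP _ _ => IsAssociatedPrime.isPrime hP)).mp hsub
  have hP' := AssociatedPrimes.mem_iff.mp hP
  obtain ⟨hprime, x, hx⟩ := isAssociatedPrime_iff.mp hP'
  obtain ⟨p, rfl⟩ := Submodule.mkQ_surjective J x
  have hmem : ∀ r, r ∈ P ↔ r * p ∈ J := by
    intro r
    rw [hx, Submodule.mem_colon_singleton, ← map_smul, Submodule.mem_bot, Submodule.mkQ_apply,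
      Submodule.Quotient.mk_eq_zero, smul_eq_mul]
  have hpJ : p ∈ J := hJ p fun a => (hmem _).mp (hle (Ideal.subset_span ⟨a, rfl⟩))
  exact hprime.ne_top ((Ideal.eq_top_iff_one _).mpr ((hmem 1).mpr (by simpa using hpJ)))

/-- A sequence in the maximal ideal `(x_1,…,x_n)` does not generate `S/I` for a proper ideal `I`
contained in it; this is the nondegeneracy clause of regular sequences. -/
lemma top_ne_ofList_smul (I : Ideal (MvPolynomial (Fin n) K))
    (hI : I ≤ idealOfVars (Fin n) K) (rs : List (MvPolynomial (Fin n) K))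
    (hrs : ∀ a ∈ rs, a ∈ idealOfVars (Fin n) K) :
    (⊤ : Submodule (MvPolynomial (Fin n) K) (MvPolynomial (Fin n) K ⧸ I)) ≠
      Ideal.ofList rs • ⊤ := by
  intro h
  have hle : Ideal.ofList rs ≤ idealOfVars (Fin n) K := Ideal.span_le.mpr hrs
  have hall : ∀ y ∈ Ideal.ofList rs •
      (⊤ : Submodule (MvPolynomial (Fin n) K) (MvPolynomial (Fin n) K ⧸ I)),
      ∃ p ∈ idealOfVars (Fin n) K, Submodule.mkQ I p = y := by
    intro y hy
    refine Submodule.smul_induction_on hy ?_ ?_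
    · intro r hr m _
      obtain ⟨q, rfl⟩ := Submodule.mkQ_surjective I m
      exact ⟨r * q, Ideal.mul_mem_right _ _ (hle hr), by rw [← map_smul, smul_eq_mul]⟩
    · rintro x y ⟨p, hp, rfl⟩ ⟨q, hq, rfl⟩
      exact ⟨p + q, add_mem hp hq, map_add _ _ _⟩
  obtain ⟨p, hp, hp1⟩ := hall (Submodule.mkQ I 1) (h ▸ trivial)
  have h1 : (1 : MvPolynomial (Fin n) K) ∈ idealOfVars (Fin n) K := by
    have := hI ((Submodule.Quotient.eq I).mp hp1.symm)
    simpa using add_mem this hp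
  have h0 : idealOfVars (Fin n) K ≤ RingHom.ker (constantCoeff (R := K) (σ := Fin n)) := by
    refine Ideal.span_le.mpr ?_
    rintro _ ⟨a, rfl⟩
    simp
  have := h0 h1
  simp at this

end Regular

/-! ### Edge ideals -/

section EdgeIdeal

variable {n : ℕ}

/-- The edge ideal of a graph, generated by `x_a x_b` for the edges `ab`. -/
noncomputable def edgeIdeal (K : Type) [Field K] (G : SimpleGraph (Fin n)) : Ideal (MvPolynomial (Fin n) K) :=
  Ideal.span {p | ∃ a b, G.Adj a b ∧ p = X a * X b}

/-- The exponent vector `m` is supported on an independent set of `G`, that is, on a face of the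
independence complex. -/
def IsFaceExp (G : SimpleGraph (Fin n)) (m : Fin n →₀ ℕ) : Prop :=
  ∀ a b, G.Adj a b → m a = 0 ∨ m b = 0

variable {K : Type} [Field K] {G : SimpleGraph (Fin n)}

/-- Monomials supported on faces form a basis of the Stanley–Reisner ring `S/I(G)`. -/
lemma mem_edgeIdeal {p : MvPolynomial (Fin n) K} :
    p ∈ edgeIdeal K G ↔ ∀ m, IsFaceExp G m → coeff m p = 0 := by
  have hset : {p : MvPolynomial (Fin n) K | ∃ a b, G.Adj a b ∧ p = X a * X b} =
      (fun s => monomial s (1 : K)) ''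
        {s | ∃ a b, G.Adj a b ∧ s = Finsupp.single a 1 + Finsupp.single b 1} := by
    ext p
    constructor
    · rintro ⟨a, b, h, rfl⟩
      exact ⟨_, ⟨a, b, h, rfl⟩, by simp [X, monomial_mul]⟩
    · rintro ⟨_, ⟨a, b, h, rfl⟩, rfl⟩
      exact ⟨a, b, h, by simp [X, monomial_mul]⟩
  rw [edgeIdeal, hset, mem_ideal_span_monomial_image]
  constructor
  · intro h m hm
    by_contra hne
    obtain ⟨_, ⟨a, b, hab, rfl⟩, hle⟩ := h m (mem_support_iff.mpr hne)
    have ha := hle a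
    have hb := hle b
    simp only [Finsupp.add_apply, Finsupp.single_eq_same] at ha hb
    rcases hm a b hab with h | h <;> omega
  · intro h m hm
    have hnf : ¬ IsFaceExp G m := fun hf => mem_support_iff.mp hm (h m hf)
    simp only [IsFaceExp, not_forall, not_or] at hnf
    obtain ⟨a, b, hab, ha, hb⟩ := hnf
    refine ⟨_, ⟨a, b, hab, rfl⟩, fun c => ?_⟩
    have := hab.ne
    simp only [Finsupp.add_apply, Finsupp.single_apply]
    split_ifs <;> first | omega | (subst_vars; omega)

lemma IsFaceExp.of_support {m m' : Fin n →₀ ℕ} (h : IsFaceExp G m)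
    (hs : ∀ a, m a = 0 → m' a = 0) : IsFaceExp G m' :=
  fun a b hab => (h a b hab).imp (hs a) (hs b)

lemma isFaceExp_zero : IsFaceExp G 0 := fun _ _ _ => Or.inl rfl

lemma isFaceExp_single (a : Fin n) : IsFaceExp G (Finsupp.single a 1) := by
  intro b c hbc
  have := hbc.ne
  simp only [Finsupp.single_apply]
  split_ifs <;> simp_all

lemma isFaceExp_pair {a b : Fin n} (hab : Gᶜ.Adj a b) :
    IsFaceExp G (Finsupp.single a 1 + Finsupp.single b 1) := by
  intro c d hcd
  rw [SimpleGraph.compl_adj] at hab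
  have h1 := hcd.ne
  have h2 := hcd.symm
  simp only [Finsupp.add_apply, Finsupp.single_apply]
  by_cases hac : a = c <;> by_cases hbc : b = c <;> by_cases had : a = d <;>
    by_cases hbd : b = d <;> simp_all

lemma edgeIdeal_le : edgeIdeal K G ≤ idealOfVars (Fin n) K := by
  refine Ideal.span_le.mpr ?_
  rintro _ ⟨a, b, -, rfl⟩
  exact Ideal.mul_mem_right _ _ (Ideal.subset_span ⟨a, rfl⟩)

lemma X_mul_mem_edgeIdeal {a b : Fin n} (hab : G.Adj a b) :
    (X a * X b : MvPolynomial (Fin n) K) ∈ edgeIdeal K G :=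
  Ideal.subset_span ⟨a, b, hab, rfl⟩

/-- The maximal ideal is not associated to `S/I(G)`: no nonzero class is killed by all
variables. -/
lemma mem_edgeIdeal_of_X_mul (hn : 0 < n) {p : MvPolynomial (Fin n) K}
    (hp : ∀ a, X a * p ∈ edgeIdeal K G) : p ∈ edgeIdeal K G := by
  refine mem_edgeIdeal.mpr fun m hm => ?_
  obtain ⟨a, ha⟩ : ∃ a, IsFaceExp G (Finsupp.single a 1 + m) := by
    by_cases h0 : m = 0
    · exact ⟨⟨0, hn⟩, by simpa [h0] using isFaceExp_single _⟩
    · obtain ⟨a, ha⟩ := Finsupp.ne_iff.mp h0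
      refine ⟨a, hm.of_support fun c hc => ?_⟩
      have hac : a ≠ c := by rintro rfl; exact ha hc
      simp [hc, hac]
  have := mem_edgeIdeal.mp (hp a) _ ha
  rwa [coeff_X_mul] at this

/-- Elements of `I(G)` have no linear terms. -/
lemma constantCoeff_eq_zero_of_X_mul_mem {a : Fin n} {p : MvPolynomial (Fin n) K}
    (hp : X a * p ∈ edgeIdeal K G) : coeff 0 p = 0 := by
  have := mem_edgeIdeal.mp hp (Finsupp.single a 1 + 0) (by simpa using isFaceExp_single a)
  rwa [coeff_X_mul] at this

/-! ### Connected complement: lifting cocycles -/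

/-- If `Gᶜ` is connected, a family `h` with `x_b h_a = x_a h_b` in `S/I(G)` is of the form
`h_a = x_a q`. The coefficient of `q` at a monomial `m` is that of `h_a` at `m x_a`, for any `a`
such that `m x_a` is supported on a face; independence of `a` is automatic for `m ≠ 1`, and is
where connectedness enters for `m = 1`. -/
lemma exists_lift_of_cocycle (hn : 2 ≤ n) (hG : Gᶜ.Preconnected)
    (h : Fin n → MvPolynomial (Fin n) K)
    (hh : ∀ a b, X b * h a - X a * h b ∈ edgeIdeal K G) :
    ∃ q, ∀ a, h a - X a * q ∈ edgeIdeal K G := by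
  have F0 : ∀ a b m, IsFaceExp G m → coeff m (X b * h a) = coeff m (X a * h b) := by
    intro a b m hm
    have := mem_edgeIdeal.mp (hh a b) m hm
    rwa [coeff_sub, sub_eq_zero] at this
  have F1 : ∀ a b m, IsFaceExp G (m + Finsupp.single a 1 + Finsupp.single b 1) →
      coeff (m + Finsupp.single a 1) (h a) = coeff (m + Finsupp.single b 1) (h b) := by
    intro a b m hm
    have := F0 a b _ hm
    rw [mul_comm, coeff_mul_X, add_right_comm, mul_comm, coeff_mul_X] at this
    exact this
  have F2 : ∀ a m, IsFaceExp G m → m a = 0 → coeff m (h a) = 0 := by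
    intro a m hm ha
    obtain ⟨b, hba, hb⟩ : ∃ b, b ≠ a ∧ IsFaceExp G (m + Finsupp.single b 1) := by
      by_cases h0 : m = 0
      · have : Nontrivial (Fin n) := Fin.nontrivial_iff_two_le.mpr hn
        obtain ⟨b, hb⟩ := exists_ne a
        exact ⟨b, hb, by simpa [h0] using isFaceExp_single b⟩
      · obtain ⟨b, hb⟩ := Finsupp.ne_iff.mp h0
        refine ⟨b, by rintro rfl; exact hb ha, hm.of_support fun c hc => ?_⟩
        have hbc : b ≠ c := by rintro rfl; exact hb hc
        simp [hc, hbc]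
    have := F0 a b _ hb
    rw [mul_comm, coeff_mul_X, coeff_X_mul', if_neg] at this
    · exact this
    · simp [ha, hba]
  have F4 : ∀ m, ∃ v, (∀ a, IsFaceExp G (m + Finsupp.single a 1) →
      coeff (m + Finsupp.single a 1) (h a) = v) ∧
      ∃ a, coeff (m + Finsupp.single a 1) (h a) = v := by
    intro m
    by_cases h0 : m = 0
    · subst h0
      refine ⟨coeff (0 + Finsupp.single ⟨0, by omega⟩ 1) (h ⟨0, by omega⟩), fun a _ => ?_, _, rfl⟩
      have hr := (SimpleGraph.reachable_iff_reflTransGen _ _).mp (hG ⟨0, by omega⟩ a)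
      induction hr with
      | refl => rfl
      | tail _ hab ih =>
        exact (F1 _ _ 0 (by simpa using isFaceExp_pair hab.symm)).trans
          (ih (by simpa using isFaceExp_single _))
    · obtain ⟨c, hc⟩ := Finsupp.ne_iff.mp h0
      refine ⟨coeff (m + Finsupp.single c 1) (h c), fun a ha => F1 a c m ?_, c, rfl⟩
      refine ha.of_support fun d hd => ?_
      have hcd : c ≠ d := by
        rintro rfl
        exact hc (by simp at hd; exact hd.1)
      simp only [Finsupp.add_apply] at hd ⊢
      simp [hcd]
      simpa using hd
  choose v hv hv' using F4
  have hfin : {m | v m ≠ 0}.Finite := by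
    refine (Set.finite_iUnion fun a : Fin n => Set.Finite.preimage
      (f := fun m : Fin n →₀ ℕ => m + Finsupp.single a 1)
      (Function.Injective.injOn (add_left_injective _))
      (h a).support.finite_toSet).subset ?_
    intro m hm
    obtain ⟨a, ha⟩ := hv' m
    refine Set.mem_iUnion.mpr ⟨a, ?_⟩
    simp only [Set.mem_preimage, Finset.mem_coe, mem_support_iff]
    rw [ha]
    exact hm
  have hq : ∀ m, coeff m (∑ s ∈ hfin.toFinset, monomial s (v s)) = v m := by
    intro m
    rw [coeff_sum]
    simp only [coeff_monomial, Finset.sum_ite_eq', Set.Finite.mem_toFinset, Set.mem_ofPred_eq]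
    split_ifs with h1
    · rfl
    · simpa [eq_comm] using h1
  refine ⟨∑ s ∈ hfin.toFinset, monomial s (v s), fun a => mem_edgeIdeal.mpr fun m hm => ?_⟩
  rw [coeff_sub, sub_eq_zero]
  by_cases ha : m a = 0
  · rw [F2 a m hm ha, coeff_X_mul', if_neg (by simpa using ha)]
  · obtain ⟨m', rfl⟩ : ∃ m', m = m' + Finsupp.single a 1 :=
      ⟨m - Finsupp.single a 1, (tsub_add_cancel_of_le
        (Finsupp.single_le_iff.mpr (Nat.one_le_iff_ne_zero.mpr ha))).symm⟩
    rw [mul_comm, coeff_mul_X, hq, hv m' a hm]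

/-- If `Gᶜ` is connected and `f` is regular on `S/I(G)`, then the maximal ideal is not associated
to `S/(I(G) + (f))`. -/
lemma mem_sup_span_of_X_mul (hn : 2 ≤ n) (hG : Gᶜ.Preconnected) {f : MvPolynomial (Fin n) K}
    (hreg : ∀ p, f * p ∈ edgeIdeal K G → p ∈ edgeIdeal K G)
    {p : MvPolynomial (Fin n) K} (hp : ∀ a, ∃ q, X a * p - f * q ∈ edgeIdeal K G) :
    ∃ q, p - f * q ∈ edgeIdeal K G := by
  choose h hh using hp
  obtain ⟨q, hq⟩ := exists_lift_of_cocycle hn hG h (K := K) (by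
    intro a b
    apply hreg
    have := sub_mem (Ideal.mul_mem_left _ (X a) (hh b)) (Ideal.mul_mem_left _ (X b) (hh a))
    convert this using 1
    ring)
  refine ⟨q, mem_edgeIdeal_of_X_mul (by omega) fun a => ?_⟩
  have := add_mem (hh a) (Ideal.mul_mem_left _ f (hq a))
  convert this using 1
  ring

lemma mem_sup_span_iff (I : Ideal (MvPolynomial (Fin n) K)) (f p : MvPolynomial (Fin n) K) :
    p ∈ I ⊔ Ideal.span {f} ↔ ∃ q, p - f * q ∈ I := by
  rw [Submodule.mem_sup]
  constructor
  · rintro ⟨y, hy, z, hz, rfl⟩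
    obtain ⟨q, rfl⟩ := Ideal.mem_span_singleton'.mp hz
    exact ⟨q, by convert hy using 1; ring⟩
  · rintro ⟨q, hq⟩
    exact ⟨_, hq, f * q, Ideal.mem_span_singleton'.mpr ⟨q, mul_comm _ _⟩, by ring⟩

/-! ### Disconnected complement -/

/-- If the vertices split into two parts with all edges of `G` between them present, then no two
elements of the maximal ideal form a regular sequence on `S/I(G)`. -/
lemma not_regular_pair (A : Set (Fin n)) {a₀ b₀ : Fin n} (ha₀ : a₀ ∈ A) (hb₀ : b₀ ∉ A)
    (hA : ∀ a ∈ A, ∀ b ∉ A, G.Adj a b) {f g : MvPolynomial (Fin n) K}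
    (hf : f ∈ idealOfVars (Fin n) K) (hg : g ∈ idealOfVars (Fin n) K)
    (hfreg : ∀ p, f * p ∈ edgeIdeal K G → p ∈ edgeIdeal K G)
    (hgreg : ∀ p, (∃ q, g * p - f * q ∈ edgeIdeal K G) → ∃ q, p - f * q ∈ edgeIdeal K G) :
    False := by
  have hsplit : idealOfVars (Fin n) K = Ideal.span (X '' A) ⊔ Ideal.span (X '' Aᶜ) := by
    rw [← Ideal.span_union, ← Set.image_union, Set.union_compl_self, Set.image_univ]
  have hmul : ∀ y ∈ Ideal.span (X '' A), ∀ z ∈ Ideal.span (X '' Aᶜ : Set (MvPolynomial (Fin n) K)),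
      y * z ∈ edgeIdeal K G := by
    intro y hy z hz
    have hle : Ideal.span (X '' A) * Ideal.span (X '' Aᶜ) ≤ edgeIdeal K G := by
      rw [Ideal.span_mul_span', Ideal.span_le]
      rintro _ ⟨_, ⟨a, ha, rfl⟩, _, ⟨b, hb, rfl⟩, rfl⟩
      exact X_mul_mem_edgeIdeal (hA a ha b hb)
    exact hle (Ideal.mul_mem_mul hy hz)
  rw [hsplit, Submodule.mem_sup] at hf hg
  obtain ⟨fA, hfA, fB, hfB, rfl⟩ := hf
  obtain ⟨gA, hgA, gB, hgB, rfl⟩ := hg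
  obtain ⟨h, hh⟩ := hgreg fA ⟨gA, by
    have := sub_mem (hmul fA hfA gB hgB) (hmul gA hgA fB hfB)
    convert this using 1
    ring⟩
  have hxa : (X a₀ : MvPolynomial (Fin n) K) ∈ Ideal.span (X '' A) :=
    Ideal.subset_span ⟨a₀, ha₀, rfl⟩
  have hxb : (X b₀ : MvPolynomial (Fin n) K) ∈ Ideal.span (X '' Aᶜ) :=
    Ideal.subset_span ⟨b₀, hb₀, rfl⟩
  have h1 : X a₀ * (1 - h) ∈ edgeIdeal K G := by
    apply hfreg
    have := add_mem (Ideal.mul_mem_left _ (X a₀) hh) (hmul _ hxa _ hfB)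
    convert this using 1
    ring
  have h2 : X b₀ * h ∈ edgeIdeal K G := by
    apply hfreg
    have := sub_mem (hmul _ hfA _ hxb) (Ideal.mul_mem_left _ (X b₀) hh)
    convert this using 1
    ring
  have e1 := constantCoeff_eq_zero_of_X_mul_mem h1
  have e2 := constantCoeff_eq_zero_of_X_mul_mem h2
  rw [coeff_sub, e2] at e1
  simp at e1

lemma exists_partition (hG : ¬ Gᶜ.Preconnected) :
    ∃ A : Set (Fin n), (∃ a, a ∈ A) ∧ (∃ b, b ∉ A) ∧ ∀ a ∈ A, ∀ b ∉ A, G.Adj a b := by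
  simp only [SimpleGraph.Preconnected, not_forall] at hG
  obtain ⟨x, y, hxy⟩ := hG
  refine ⟨{z | Gᶜ.Reachable x z}, ⟨x, SimpleGraph.Reachable.refl x⟩, ⟨y, hxy⟩,
    fun a ha b hb => ?_⟩
  by_contra hab
  refine hb (SimpleGraph.Reachable.trans ha (SimpleGraph.Adj.reachable ?_))
  rw [SimpleGraph.compl_adj]
  exact ⟨by rintro rfl; exact hb ha, hab⟩

/-! ### Depth one -/

theorem smDepth_edgeIdeal_eq_one_iff (hn : 2 ≤ n) :
    smDepth K n (edgeIdeal K G) = 1 ↔ ¬ Gᶜ.Preconnected := by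
  obtain ⟨f, hf, hfreg⟩ := exists_regular (edgeIdeal K G)
    (fun p hp => mem_edgeIdeal_of_X_mul (by omega) hp)
  constructor
  · intro h1 hG
    obtain ⟨g, hg, hgreg⟩ := exists_regular (edgeIdeal K G ⊔ Ideal.span {f}) (by
      intro p hp
      simp only [mem_sup_span_iff] at hp ⊢
      exact mem_sup_span_of_X_mul hn hG hfreg hp)
    simp only [mem_sup_span_iff] at hgreg
    have hmem : ∀ a ∈ [f, g], a ∈ idealOfVars (Fin n) K := by simp [hf, hg]
    have h2 : RingTheory.Sequence.IsRegular (MvPolynomial (Fin n) K ⧸ edgeIdeal K G) [f, g] := by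
      refine ⟨?_, top_ne_ofList_smul _ edgeIdeal_le _ hmem⟩
      rw [RingTheory.Sequence.isWeaklyRegular_cons_iff,
        RingTheory.Sequence.isWeaklyRegular_cons_iff, isSMulRegular_quot_iff,
        isSMulRegular_quotSMulTop_iff]
      exact ⟨hfreg, hgreg, RingTheory.Sequence.IsWeaklyRegular.nil _ _⟩
    -- A set of lengths without upper bound has junk supremum `0`, so `sSup = 1` gives a bound.
    have hbdd : BddAbove {r : ℕ | ∃ rs : List (MvPolynomial (Fin n) K), rs.length = r ∧
        (∀ a ∈ rs, a ∈ Ideal.span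
          (Set.range (MvPolynomial.X : Fin n → MvPolynomial (Fin n) K))) ∧
        RingTheory.Sequence.IsRegular (MvPolynomial (Fin n) K ⧸ edgeIdeal K G) rs} := by
      by_contra hb
      rw [smDepth, Nat.sSup_of_not_bddAbove hb] at h1
      exact absurd h1 (by norm_num)
    have := le_csSup hbdd ⟨[f, g], rfl, hmem, h2⟩
    rw [← smDepth, h1] at this
    simp at this
  · intro hG
    obtain ⟨A, ⟨a₀, ha₀⟩, ⟨b₀, hb₀⟩, hA⟩ := exists_partition hG
    have hmem : ∀ a ∈ [f], a ∈ idealOfVars (Fin n) K := by simp [hf]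
    have h1 : RingTheory.Sequence.IsRegular (MvPolynomial (Fin n) K ⧸ edgeIdeal K G) [f] := by
      refine ⟨?_, top_ne_ofList_smul _ edgeIdeal_le _ hmem⟩
      rw [RingTheory.Sequence.isWeaklyRegular_cons_iff, isSMulRegular_quot_iff]
      exact ⟨hfreg, RingTheory.Sequence.IsWeaklyRegular.nil _ _⟩
    refine (IsGreatest.csSup_eq ⟨⟨[f], rfl, hmem, h1⟩, ?_⟩)
    rintro r ⟨rs, rfl, hrs, hreg⟩
    match rs, hrs, hreg with
    | [], _, _ => simp
    | [_], _, _ => simp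
    | f' :: g' :: l, hrs, hreg =>
      exfalso
      have := hreg.toIsWeaklyRegular
      rw [RingTheory.Sequence.isWeaklyRegular_cons_iff,
        RingTheory.Sequence.isWeaklyRegular_cons_iff, isSMulRegular_quot_iff,
        isSMulRegular_quotSMulTop_iff] at this
      exact not_regular_pair A ha₀ hb₀ hA (hrs f' (by simp)) (hrs g' (by simp)) this.1 this.2.1

end EdgeIdeal

/-! ### Lexsegment graphs -/

/-- The graph on `Fin n` whose edges are the pairs in `L(u,v)`; vertex `a : Fin n` stands for
`x_{a+1}`. -/
def lexSegGraph (n : ℕ) (u v : ℕ × ℕ) : SimpleGraph (Fin n) :=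
  SimpleGraph.fromRel fun a b => (a.1 + 1, b.1 + 1) ∈ lexSegSet n u v

lemma xv_succ (K : Type) [Field K] {n : ℕ} (a : Fin n) : xv K n (a.1 + 1) = X a := by
  simp [xv]

lemma lexSegIdeal_eq_edgeIdeal (K : Type) [Field K] (n : ℕ) (u v : ℕ × ℕ) :
    lexSegIdeal K n u v = edgeIdeal K (lexSegGraph n u v) := by
  unfold lexSegIdeal edgeIdeal
  congr 1
  ext p
  constructor
  · rintro ⟨⟨c, d⟩, hw, rfl⟩
    obtain ⟨h1, h2, h3⟩ : 1 ≤ c ∧ c < d ∧ d ≤ n := hw.1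
    obtain ⟨c, rfl⟩ : ∃ c', c = c' + 1 := ⟨c - 1, by omega⟩
    obtain ⟨d, rfl⟩ : ∃ d', d = d' + 1 := ⟨d - 1, by omega⟩
    refine ⟨⟨c, by omega⟩, ⟨d, by omega⟩, ?_, ?_⟩
    · rw [lexSegGraph, SimpleGraph.fromRel_adj]
      exact ⟨by simp; omega, Or.inl hw⟩
    · rw [← xv_succ K ⟨c, _⟩, ← xv_succ K ⟨d, _⟩]
  · rintro ⟨a, b, hab, rfl⟩
    rw [lexSegGraph, SimpleGraph.fromRel_adj] at hab
    rcases hab.2 with h | h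
    · exact ⟨_, h, by simp only [xv_succ]⟩
    · exact ⟨_, h, by simp only [xv_succ, mul_comm]⟩

lemma compl_lexSegGraph_adj {n i j k : ℕ} {a b : Fin n} (hab : a < b) :
    (lexSegGraph n (1, i) (j, k))ᶜ.Adj a b ↔
      ¬ ((a.1 = 0 → i ≤ b.1 + 1) ∧ (a.1 + 1 < j ∨ (a.1 + 1 = j ∧ b.1 + 1 ≤ k))) := by
  have h1 : a.1 < b.1 := hab
  have h2 := b.2
  rw [SimpleGraph.compl_adj, lexSegGraph, SimpleGraph.fromRel_adj]
  simp only [lexSegSet, validPair, lexGE, Set.mem_ofPred_eq, ne_eq, Fin.ext_iff]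
  omega

lemma compl_lexSegGraph_preconnected_iff {n i j k : ℕ} (hi3 : 3 ≤ i) (hin : i ≤ n) (hj : 2 ≤ j)
    (hjk : j < k) (hkn : k ≤ n) :
    ¬ (lexSegGraph n (1, i) (j, k))ᶜ.Preconnected ↔ lexGE (i - 1, n) (j, k) := by
  simp only [lexGE]
  constructor
  · intro hnot
    by_contra hc
    apply hnot
    set H := (lexSegGraph n (1, i) (j, k))ᶜ with hH
    have adj : ∀ a b : Fin n, a < b →
        ¬ ((a.1 = 0 → i ≤ b.1 + 1) ∧ (a.1 + 1 < j ∨ (a.1 + 1 = j ∧ b.1 + 1 ≤ k))) →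
        H.Reachable a b := fun a b hab h => ((compl_lexSegGraph_adj hab).mpr h).reachable
    let o : Fin n := ⟨0, by omega⟩
    -- Vertices `2, …, i - 1` are joined to `1`.
    have low : ∀ z : Fin n, z.1 + 1 < i → H.Reachable o z := by
      intro z hz
      by_cases h0 : z.1 = 0
      · have : z = o := Fin.ext h0
        rw [this]
      · exact adj o z (Fin.lt_def.mpr (by simp only [o]; omega))
          (fun h => absurd (h.1 rfl) (by omega))
    have all : ∀ z : Fin n, H.Reachable o z := by
      intro z
      by_cases hz : z.1 + 1 < i
      · exact low z hz
      let w : Fin n := ⟨i - 2, by omega⟩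
      have hw : H.Reachable o w := low w (by simp only [w]; omega)
      by_cases hij : i - 1 = j
      · -- Here `k < n`, and vertices beyond `j` reach `j` through `n`.
        let t : Fin n := ⟨n - 1, by omega⟩
        have ht : H.Reachable w t :=
          adj w t (Fin.lt_def.mpr (by simp only [w, t]; omega)) (by simp only [w, t]; omega)
        by_cases hzn : z.1 + 1 = n
        · have : z = t := Fin.ext (by simp only [t]; omega)
          rw [this]
          exact hw.trans ht
        · have hzt : H.Reachable z t :=
            adj z t (Fin.lt_def.mpr (by simp only [t]; omega)) (by simp only [t]; omega)
          exact (hw.trans ht).trans hzt.symm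
      · exact hw.trans
          (adj w z (Fin.lt_def.mpr (by simp only [w]; omega)) (by simp only [w]; omega))
    exact fun x y => (all x).symm.trans (all y)
  · intro hc hconn
    have hr := (SimpleGraph.reachable_iff_reflTransGen _ _).mp
      (hconn ⟨0, by omega⟩ ⟨n - 1, by omega⟩)
    -- The set `{1, …, i - 1}` is closed under adjacency in the complement.
    have hclosed : ∀ z : Fin n, Relation.ReflTransGen
        (lexSegGraph n (1, i) (j, k))ᶜ.Adj ⟨0, by omega⟩ z → z.1 + 1 < i := by
      intro z hz
      induction hz with
      | refl => simp only; omega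
      | @tail b c _ hbc ih =>
        by_contra hci
        have hlt : b < c := Fin.lt_def.mpr (by omega)
        rw [compl_lexSegGraph_adj hlt] at hbc
        have := c.2
        omega
    have := hclosed _ hr
    simp only at this
    omega

/-- For the lexsegment edge ideal `I = (L(x_1 x_i, x_j x_k))`
with `3 ≤ i ≤ n`, `2 ≤ j < k ≤ n` and `u >_lex v`, one has `depth(S/I) = 1`
if and only if `x_{i-1} x_n ≥_lex x_j x_k`. -/
theorem lexSegIdeal_depth_eq_one_iff (K : Type) [Field K] (n i j k : ℕ)
    (hi3 : 3 ≤ i) (hin : i ≤ n) (hj : 2 ≤ j) (hjk : j < k) (hkn : k ≤ n)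
    (huv : lexGT (1, i) (j, k)) :
    smDepth K n (lexSegIdeal K n (1, i) (j, k)) = 1 ↔ lexGE (i - 1, n) (j, k) := by
  rw [lexSegIdeal_eq_edgeIdeal, smDepth_edgeIdeal_eq_one_iff (by omega),
    compl_lexSegGraph_preconnected_iff hi3 hin hj hjk hkn]
end

section
/- Let I = (L(u,v)) ⊂ S = K[x_1,…,x_n] be a lexsegment edge ideal determined by u = x_1 x_i with 3 ≤ i ≤ n and v = x_j x_k with 3 ≤ j < k ≤ n, where u >_lex v and v >_lex x_{i-1}x_n. Then depth(S/I) = 2. -/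
/-!
Write `e₁`, `e₂` for the elementary symmetric polynomials in `x_1, …, x_n`, and `P_F` for the prime
generated by the variables outside a set `F`. The edge ideal `I` is the Stanley–Reisner ideal of
the independence complex `Δ` of the lexsegment graph.

*Depth at least two.* The sequence `e₁, e₂` is regular on `S/I`. The hypotheses on `u` and `v` say
that every face of `Δ` lies in a face with at least two vertices through `x_1` or `x_n`
(`exists_face_superset`), so `I = ⋂ P_F` over such faces `F` (`lexSegIdeal_eq_complexIdeal`), and
`e₁` is a nonzerodivisor modulo each `P_F`. That `e₂` is a nonzerodivisor modulo `I + (e₁)` is a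
connectedness property. It holds for one face with two vertices or more, as `S/(P_F + (e₁))` is then
a domain in which `e₂ ≠ 0` (`EsymmTwoRegular.singleton`), and it passes to the union of two
complexes sharing a vertex: if `J₁`, `J₂` are their ideals, then `J₁ + J₂` is the ideal of the
intersection, on which `e₁` is again a nonzerodivisor, and the exact sequence
`0 → S/(J₁ ∩ J₂) → S/J₁ ⊕ S/J₂ → S/(J₁ + J₂) → 0` glues (`EsymmTwoRegular.union`). Faces through
`x_1` are glued along `x_1`, those through `x_n` along `x_n`, and the two stars along a common
vertex `c` (`exists_hinge`), which exists because `v >_lex x_{i-1} x_n`.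

*Depth at most two.* The annihilator of `x_2` in `S/I` is the prime `(x_3, …, x_n)`, whose quotient
has dimension two, and a regular sequence is no longer than `dim S/P` for any associated prime `P`
(`length_le_coheight`).
-/

open MvPolynomial

/-! ### Regular sequences and associated primes -/

open scoped Pointwise in
/-- Over a Noetherian local ring, `depth M ≤ dim R/P` for every associated prime `P` of `M`, in
terms of regular sequences. If `f` is `M`-regular, then by Nakayama some element annihilated by
`P` survives in `M/fM`; an associated prime `Q` of `M/fM` above its annihilator contains `P` and
`f`, hence is strictly larger than `P`, and one can induct. -/
theorem length_le_coheight_of_isLocalRing {R : Type} [CommRing R] [IsLocalRing R]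
    [IsNoetherianRing R] (rs : List R) :
    ∀ (M : Type) [AddCommGroup M] [Module R M] [Module.Finite R M] (P : PrimeSpectrum R) (x : M),
      (∀ r : R, r • x = 0 ↔ r ∈ P.asIdeal) → (∀ r ∈ rs, r ∈ IsLocalRing.maximalIdeal R) →
      RingTheory.Sequence.IsWeaklyRegular M rs → (rs.length : ℕ∞) ≤ Order.coheight P := by
  induction rs with
  | nil => intros; simp
  | cons f rs ih =>
    intro M _ _ _ P x hx hmem hreg
    rw [RingTheory.Sequence.isWeaklyRegular_cons_iff] at hreg
    obtain ⟨hf, hreg⟩ := hreg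
    have hfm := hmem f (by simp)
    -- `N = (0 :_M P)`; if `N ⊆ fM` then `N ⊆ fN`, because `f` is a nonzerodivisor on `M`
    let N : Submodule R M := Submodule.torsionBySet R M (P.asIdeal : Set R)
    have hxN : x ∈ N := (Submodule.mem_torsionBySet_iff _ _).2 fun p => (hx p).2 p.2
    have hx0 : x ≠ 0 := by
      rintro rfl
      exact P.2.ne_top ((Ideal.eq_top_iff_one _).2 ((hx 1).1 (by simp)))
    obtain ⟨z, hzN, hz⟩ : ∃ z ∈ N, z ∉ f • (⊤ : Submodule R M) := by
      by_contra! hcon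
      have hle : N ≤ IsLocalRing.maximalIdeal R • N := by
        intro z hz
        obtain ⟨w, -, rfl⟩ := (Submodule.mem_smul_pointwise_iff_exists _ _ _).1 (hcon z hz)
        refine Submodule.smul_mem_smul hfm ((Submodule.mem_torsionBySet_iff _ _).2 fun p => ?_)
        have := (Submodule.mem_torsionBySet_iff _ _).1 hz p
        rw [smul_comm] at this
        exact hf.right_eq_zero_of_smul this
      have hbot : N = ⊥ := Submodule.eq_bot_of_le_smul_of_le_jacobson_bot _ N
        (IsNoetherian.noetherian N) hle (IsLocalRing.maximalIdeal_le_jacobson _)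
      rw [hbot] at hxN
      exact hx0 ((Submodule.mem_bot R).1 hxN)
    have hz' : (Submodule.Quotient.mk z : QuotSMulTop f M) ≠ 0 := by
      rwa [ne_eq, Submodule.Quotient.mk_eq_zero]
    obtain ⟨Q, hQ, hzQ⟩ := exists_le_isAssociatedPrime_of_isNoetherianRing R _ hz'
    obtain ⟨hQp, y, hy⟩ := isAssociatedPrime_iff.1 hQ
    have hmemQ : ∀ r : R, r • (Submodule.Quotient.mk z : QuotSMulTop f M) = 0 → r ∈ Q := by
      intro r hr
      exact hzQ (Submodule.mem_colon_singleton.2 ((Submodule.mem_bot R).2 hr))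
    have hPQ : P < ⟨Q, hQp⟩ := by
      rw [← PrimeSpectrum.asIdeal_lt_asIdeal]
      refine lt_of_le_of_ne (fun p hp => hmemQ p ?_) fun h => ?_
      · rw [← Submodule.Quotient.mk_smul,
          (Submodule.mem_torsionBySet_iff _ _).1 hzN ⟨p, hp⟩, Submodule.Quotient.mk_zero]
      · have : f ∈ Q := hmemQ f (by
          rw [← Submodule.Quotient.mk_smul, Submodule.Quotient.mk_eq_zero]
          exact Submodule.smul_mem_pointwise_smul _ _ _ trivial)
        rw [← show P.asIdeal = Q from h, ← hx] at this
        exact hx0 (hf.right_eq_zero_of_smul this)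
    have := ih (QuotSMulTop f M) ⟨Q, hQp⟩ y
      (fun r => by
        change _ ↔ r ∈ Q
        rw [hy, Submodule.mem_colon_singleton, Submodule.mem_bot])
      (fun r hr => hmem r (by simp [hr])) hreg
    calc ((f :: rs).length : ℕ∞) = rs.length + 1 := by simp
      _ ≤ Order.coheight (⟨Q, hQp⟩ : PrimeSpectrum R) + 1 := by gcongr
      _ ≤ _ := Order.coheight_add_one_le hPQ

/-- Global form of `length_le_coheight_of_isLocalRing`, for sequences lying in a prime `m ⊇ P`. A
weakly regular sequence stays weakly regular in the localization at `m`, where the annihilator of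
the image of `x` is the extension of `P`. -/
theorem length_le_coheight {R : Type} [CommRing R] [IsNoetherianRing R] (rs : List R)
    (M : Type) [AddCommGroup M] [Module R M] [Module.Finite R M] (P : PrimeSpectrum R) (x : M)
    (hx : ∀ r : R, r • x = 0 ↔ r ∈ P.asIdeal) (m : Ideal R) [m.IsPrime] (hPm : P.asIdeal ≤ m)
    (hmem : ∀ r ∈ rs, r ∈ m) (hreg : RingTheory.Sequence.IsWeaklyRegular M rs) :
    (rs.length : ℕ∞) ≤ Order.coheight P := by
  let S := Localization.AtPrime m
  have hdisj : Disjoint (m.primeCompl : Set R) (P.asIdeal : Set R) :=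
    Set.disjoint_left.2 fun r hr hrP => hr (hPm hrP)
  have hprime := IsLocalization.isPrime_of_isPrime_disjoint m.primeCompl S P.asIdeal P.2 hdisj
  have hcomap : (P.asIdeal.map (algebraMap R S)).comap (algebraMap R S) = P.asIdeal :=
    IsLocalization.under_map_of_isPrime_disjoint m.primeCompl S P.2 hdisj
  let Q : PrimeSpectrum S := ⟨P.asIdeal.map (algebraMap R S), hprime⟩
  have hann : ∀ r : R, algebraMap R S r • LocalizedModule.mkLinearMap m.primeCompl M x = 0 ↔
      r ∈ P.asIdeal := by
    intro r
    rw [algebraMap_smul, ← map_smul, IsLocalizedModule.eq_zero_iff m.primeCompl]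
    constructor
    · rintro ⟨c, hc⟩
      rw [Submonoid.smul_def, smul_smul, hx] at hc
      exact (P.2.mem_or_mem hc).resolve_left fun h => c.2 (hPm h)
    · intro h
      exact ⟨1, by rw [(hx r).2 h, smul_zero]⟩
  have key := length_le_coheight_of_isLocalRing (rs.map (algebraMap R S))
    (LocalizedModule m.primeCompl M) Q (LocalizedModule.mkLinearMap m.primeCompl M x)
    (fun s => by
      obtain ⟨r, t, rfl⟩ := IsLocalization.exists_mk'_eq m.primeCompl s
      have hu := IsLocalization.map_units S t
      change _ ↔ _ ∈ P.asIdeal.map (algebraMap R S)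
      rw [← hu.smul_eq_zero, smul_smul, mul_comm, IsLocalization.mk'_spec, hann,
        ← Ideal.unit_mul_mem_iff_mem _ hu, mul_comm, IsLocalization.mk'_spec,
        ← Ideal.mem_comap, hcomap])
    (fun s hs => by
      obtain ⟨r, hr, rfl⟩ := List.mem_map.1 hs
      exact (IsLocalization.AtPrime.to_map_mem_maximal_iff S m r).2 (hmem r hr))
    (hreg.of_isLocalizedModule S m.primeCompl (LocalizedModule.mkLinearMap m.primeCompl M))
  rw [List.length_map] at key
  refine key.trans ((Order.coheight_le_coheight_apply_of_strictMono
    (PrimeSpectrum.comap (algebraMap R S)) ?_ Q).trans ?_)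
  · exact Monotone.strictMono_of_injective (fun _ _ h => Ideal.comap_mono h)
      (PrimeSpectrum.localization_comap_injective S m.primeCompl)
  · rw [show PrimeSpectrum.comap (algebraMap R S) Q = P from PrimeSpectrum.ext hcomap]

/-! ### Stanley–Reisner ideals and elementary symmetric polynomials -/

section FaceIdeals

variable {K : Type} [Field K] {n : ℕ}

variable (K) in
/-- The monomial prime `P_F` generated by the variables whose index lies outside `F`. -/
noncomputable def faceIdeal (F : Finset (Fin n)) : Ideal (MvPolynomial (Fin n) K) :=
  Ideal.span (X '' {i | i ∉ F})

theorem mem_faceIdeal {F : Finset (Fin n)} {p : MvPolynomial (Fin n) K} :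
    p ∈ faceIdeal K F ↔ ∀ m ∈ p.support, ¬ m.support ⊆ F := by
  rw [faceIdeal, mem_ideal_span_X_image]
  simp [Finset.not_subset, and_comm]

/-- An endomorphism which is the identity modulo `J` on the variables is so on all polynomials. -/
theorem sub_map_mem (φ : MvPolynomial (Fin n) K →ₐ[K] MvPolynomial (Fin n) K)
    (J : Ideal (MvPolynomial (Fin n) K)) (h : ∀ i, X i - φ (X i) ∈ J)
    (p : MvPolynomial (Fin n) K) : p - φ p ∈ J := by
  have : Ideal.Quotient.mkₐ K J = (Ideal.Quotient.mkₐ K J).comp φ := by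
    ext i
    simpa using! Ideal.Quotient.eq.2 (h i)
  exact Ideal.Quotient.eq.1 (by simpa using! DFunLike.congr_fun this p)

theorem faceIdeal_eq_ker (F : Finset (Fin n)) :
    faceIdeal K F = RingHom.ker
      (aeval (fun i => if i ∈ F then X i else 0) :
        MvPolynomial (Fin n) K →ₐ[K] MvPolynomial (Fin n) K) := by
  apply le_antisymm
  · rw [faceIdeal, Ideal.span_le]
    rintro _ ⟨i, hi, rfl⟩
    simp_all [RingHom.mem_ker]
  · intro p hp
    rw [RingHom.mem_ker] at hp
    have := sub_map_mem (aeval (fun i => if i ∈ F then X i else 0)) (faceIdeal K F)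
      (fun i => by
        rw [aeval_X]
        split_ifs with h
        · simp
        · rw [sub_zero]; exact Ideal.subset_span ⟨i, h, rfl⟩) p
    rwa [hp, sub_zero] at this

instance isPrime_faceIdeal (F : Finset (Fin n)) : (faceIdeal K F).IsPrime := by
  rw [faceIdeal_eq_ker]
  exact RingHom.ker_isPrime _

theorem X_mem_faceIdeal {F : Finset (Fin n)} {i : Fin n} :
    (X i : MvPolynomial (Fin n) K) ∈ faceIdeal K F ↔ i ∉ F := by
  rw [mem_faceIdeal, support_X]
  simp

theorem esymm_mem_faceIdeal_empty {d : ℕ} (hd : 1 ≤ d) :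
    esymm (Fin n) K d ∈ faceIdeal K (∅ : Finset (Fin n)) := by
  refine Ideal.sum_mem _ fun t ht => ?_
  obtain ⟨i, hi⟩ : t.Nonempty :=
    Finset.card_pos.1 (by rw [(Finset.mem_powersetCard.1 ht).2]; exact hd)
  exact Ideal.mem_of_dvd _ (Finset.dvd_prod_of_mem X hi)
    (X_mem_faceIdeal.2 (Finset.notMem_empty i))

theorem esymm_one_notMem_faceIdeal {F : Finset (Fin n)} (hF : F.Nonempty) :
    esymm (Fin n) K 1 ∉ faceIdeal K F := by
  obtain ⟨a, ha⟩ := hF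
  intro h
  rw [mem_faceIdeal] at h
  refine h (Finsupp.single a 1) ?_ ?_
  · rw [mem_support_iff, esymm_one, coeff_sum]
    simp [coeff_X, Finsupp.single_left_inj]
  · exact Finsupp.support_single_subset.trans (Finset.singleton_subset_iff.2 ha)

variable (K) in
/-- The intersection of the primes `P_F`, `F ∈ T`: the Stanley–Reisner ideal of the simplicial
complex whose faces are the subsets of the members of `T`. -/
noncomputable def complexIdeal (T : Finset (Finset (Fin n))) : Ideal (MvPolynomial (Fin n) K) :=
  ⨅ F ∈ T, faceIdeal K F

theorem mem_complexIdeal {T : Finset (Finset (Fin n))} {p : MvPolynomial (Fin n) K} :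
    p ∈ complexIdeal K T ↔ ∀ F ∈ T, p ∈ faceIdeal K F := by
  simp [complexIdeal]

/-- The sum of the Stanley–Reisner ideals of two complexes contains the one of their intersection,
the complex generated by the sets `F ∩ G`. -/
theorem mem_sup_complexIdeal {T₁ T₂ : Finset (Finset (Fin n))} {p : MvPolynomial (Fin n) K}
    (h : ∀ F ∈ T₁, ∀ G ∈ T₂, p ∈ faceIdeal K (F ∩ G)) :
    p ∈ complexIdeal K T₁ ⊔ complexIdeal K T₂ := by
  have hmon : ∀ (T : Finset (Finset (Fin n))) (m : Fin n →₀ ℕ) (c : K),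
      (∀ F ∈ T, ¬ m.support ⊆ F) → monomial m c ∈ complexIdeal K T := by
    intro T m c hm
    rw [mem_complexIdeal]
    intro F hF
    rw [mem_faceIdeal]
    intro m' hm'
    rw [Finset.mem_singleton.1 (support_monomial_subset hm')]
    exact hm F hF
  rw [← support_sum_monomial_coeff p]
  refine Ideal.sum_mem _ fun m hm => ?_
  by_cases h₁ : ∀ F ∈ T₁, ¬ m.support ⊆ F
  · exact Ideal.mem_sup_left (hmon _ _ _ h₁)
  · push Not at h₁
    obtain ⟨F, hF, hmF⟩ := h₁
    refine Ideal.mem_sup_right (hmon _ _ _ fun G hG hmG => ?_)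
    exact mem_faceIdeal.1 (h F hF G hG) m hm (Finset.subset_inter hmF hmG)

theorem mem_complexIdeal_of_esymm_one_mul {T : Finset (Finset (Fin n))}
    (hT : ∀ F ∈ T, F.Nonempty) {p : MvPolynomial (Fin n) K}
    (h : esymm (Fin n) K 1 * p ∈ complexIdeal K T) : p ∈ complexIdeal K T := by
  rw [mem_complexIdeal] at h ⊢
  intro F hF
  exact ((isPrime_faceIdeal F).mem_or_mem (h F hF)).resolve_left
    (esymm_one_notMem_faceIdeal (hT F hF))

variable (K) in
/-- The second elementary symmetric polynomial `e₂` is a nonzerodivisor modulo `e₁` and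
`complexIdeal K T`, written out in terms of elements. -/
def EsymmTwoRegular (T : Finset (Finset (Fin n))) : Prop :=
  ∀ p q : MvPolynomial (Fin n) K,
    esymm (Fin n) K 2 * p - esymm (Fin n) K 1 * q ∈ complexIdeal K T →
      ∃ r, p - esymm (Fin n) K 1 * r ∈ complexIdeal K T

/-- For a single face `F`, eliminating one variable of `F` by means of `e₁` identifies
`S/(P_F + (e₁))` with a polynomial ring, which is a domain, in which `e₂` does not vanish. -/
theorem EsymmTwoRegular.singleton {F : Finset (Fin n)} (hF : 2 ≤ F.card) :
    EsymmTwoRegular K {F} := by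
  intro p q hpq
  have hT : complexIdeal K {F} = faceIdeal K F := by simp [complexIdeal]
  rw [hT] at hpq ⊢
  obtain ⟨a, ha, b, hb, hab⟩ := Finset.one_lt_card.1 hF
  have hsum : esymm (Fin n) K 1 = X a + ∑ i ∈ F.erase a, X i + ∑ i ∈ Fᶜ, X i := by
    rw [esymm_one, Finset.add_sum_erase F X ha, Finset.sum_add_sum_compl]
  -- `Ψ` kills the variables outside `F` and solves `e₁ = 0` for `x_a`
  let Ψ : MvPolynomial (Fin n) K →ₐ[K] MvPolynomial (Fin n) K :=
    aeval (fun i => if i = a then -∑ j ∈ F.erase a, X j else if i ∈ F then X i else 0)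
  have hΨa : Ψ (X a) = -∑ j ∈ F.erase a, X j := by simp [Ψ]
  have hΨF : ∀ i ∈ F.erase a, Ψ (X i) = X i := by
    intro i hi
    rw [Finset.mem_erase] at hi
    simp [Ψ, hi.1, hi.2]
  have hΨc : ∀ i, i ∉ F → Ψ (X i) = 0 := by
    intro i hi
    have : i ≠ a := by rintro rfl; exact hi ha
    simp [Ψ, hi, this]
  have hker : ∀ x ∈ faceIdeal K F, Ψ x = 0 := by
    have : faceIdeal K F ≤ RingHom.ker Ψ := by
      rw [faceIdeal, Ideal.span_le]
      rintro _ ⟨i, hi, rfl⟩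
      exact hΨc i hi
    exact this
  have hΨ1 : Ψ (esymm (Fin n) K 1) = 0 := by
    rw [hsum, map_add, map_add, map_sum, map_sum, hΨa, Finset.sum_congr rfl hΨF,
      Finset.sum_eq_zero fun i hi => hΨc i (Finset.mem_compl.1 hi)]
    simp
  have hΨ2 : Ψ (esymm (Fin n) K 2) ≠ 0 := by
    intro h0
    -- evaluate at the point with coordinates `x_a = -1`, `x_b = 1` and `0` elsewhere
    let χ : MvPolynomial (Fin n) K →ₐ[K] K := (aeval (Pi.single b (1 : K))).comp Ψ
    have hχa : χ (X a) = -1 := by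
      simp only [χ, AlgHom.comp_apply, hΨa, map_neg, map_sum, aeval_X]
      rw [Finset.sum_pi_single']
      simp [hb, hab.symm]
    have hχb : χ (X b) = 1 := by
      simp only [χ, AlgHom.comp_apply, hΨF b (Finset.mem_erase.2 ⟨hab.symm, hb⟩), aeval_X,
        Pi.single_eq_same]
    have hχ : ∀ i, i ≠ a → i ≠ b → χ (X i) = 0 := by
      intro i hia hib
      by_cases hi : i ∈ F
      · simp [χ, AlgHom.comp_apply, hΨF i (Finset.mem_erase.2 ⟨hia, hi⟩), hib]
      · simp [χ, AlgHom.comp_apply, hΨc i hi]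
    have hval : χ (esymm (Fin n) K 2) = -1 := by
      rw [esymm, map_sum, Finset.sum_eq_single {a, b}]
      · rw [map_prod, Finset.prod_pair hab, hχa, hχb, mul_one]
      · intro t ht htab
        rw [Finset.mem_powersetCard] at ht
        have : ¬ t ⊆ {a, b} := fun hsub =>
          htab (Finset.eq_of_subset_of_card_le hsub (by rw [ht.2, Finset.card_pair hab]))
        obtain ⟨i, hi, hiab⟩ := Finset.not_subset.1 this
        simp only [Finset.mem_insert, Finset.mem_singleton, not_or] at hiab
        rw [map_prod]
        exact Finset.prod_eq_zero hi (hχ i hiab.1 hiab.2)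
      · intro h
        exact absurd (Finset.mem_powersetCard.2 ⟨Finset.subset_univ _, Finset.card_pair hab⟩) h
    rw [show χ (esymm (Fin n) K 2) = aeval (Pi.single b (1 : K)) (Ψ (esymm (Fin n) K 2)) from rfl,
      h0, map_zero] at hval
    exact one_ne_zero (neg_eq_zero.1 hval.symm)
  have hp : Ψ p = 0 := by
    have := hker _ hpq
    rw [map_sub, map_mul, map_mul, hΨ1, zero_mul, sub_zero] at this
    exact (mul_eq_zero.1 this).resolve_left hΨ2
  have hmem : p ∈ faceIdeal K F ⊔ Ideal.span {esymm (Fin n) K 1} := by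
    have := sub_map_mem Ψ (faceIdeal K F ⊔ Ideal.span {esymm (Fin n) K 1}) (fun i => ?_) p
    · rwa [hp, sub_zero] at this
    · by_cases hia : i = a
      · subst hia
        rw [hΨa, sub_neg_eq_add, eq_sub_of_add_eq hsum.symm]
        refine Ideal.sub_mem _ (Ideal.mem_sup_right (Ideal.mem_span_singleton_self _))
          (Ideal.mem_sup_left (Ideal.sum_mem _ fun j hj => ?_))
        exact X_mem_faceIdeal.2 (Finset.mem_compl.1 hj)
      · by_cases hi : i ∈ F
        · rw [hΨF i (Finset.mem_erase.2 ⟨hia, hi⟩), sub_self]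
          exact Ideal.zero_mem _
        · rw [hΨc i hi, sub_zero]
          exact Ideal.mem_sup_left (X_mem_faceIdeal.2 hi)
  obtain ⟨x, hx, y, hy, rfl⟩ := Submodule.mem_sup.1 hmem
  obtain ⟨r, rfl⟩ := Ideal.mem_span_singleton'.1 hy
  exact ⟨r, by simpa [mul_comm] using hx⟩

/-- The gluing step. With `J₁`, `J₂` the ideals of `T₁`, `T₂`, solutions `r₁`, `r₂` for the two
parts satisfy `e₁ (r₁ - r₂) ∈ J₁ + J₂`; since the complexes share a vertex, `e₁` is a nonzerodivisor
modulo `J₁ + J₂`, so `r₁ - r₂ ∈ J₁ + J₂` and the solutions can be corrected to agree. -/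
theorem EsymmTwoRegular.union {T₁ T₂ : Finset (Finset (Fin n))} (h₁ : EsymmTwoRegular K T₁)
    (h₂ : EsymmTwoRegular K T₂) (hmeet : ∃ F ∈ T₁, ∃ G ∈ T₂, (F ∩ G).Nonempty) :
    EsymmTwoRegular K (T₁ ∪ T₂) := by
  have hunion : ∀ x, x ∈ complexIdeal K (T₁ ∪ T₂) ↔
      x ∈ complexIdeal K T₁ ∧ x ∈ complexIdeal K T₂ := by
    intro x
    simp only [mem_complexIdeal, Finset.mem_union, or_imp, forall_and]
  intro p q hpq
  obtain ⟨r₁, hr₁⟩ := h₁ p q ((hunion _).1 hpq).1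
  obtain ⟨r₂, hr₂⟩ := h₂ p q ((hunion _).1 hpq).2
  have hmul : ∀ F ∈ T₁, ∀ G ∈ T₂, esymm (Fin n) K 1 * (r₁ - r₂) ∈ faceIdeal K (F ∩ G) := by
    intro F hF G hG
    have hmono : ∀ A B : Finset (Fin n), A ⊆ B → faceIdeal K B ≤ faceIdeal K A := fun A B hAB =>
      Ideal.span_mono (Set.image_mono fun i hi hiA => hi (hAB hiA))
    have e₁ := hmono _ _ (Finset.inter_subset_left (s₁ := F) (s₂ := G))
      (mem_complexIdeal.1 hr₁ F hF)
    have e₂ := hmono _ _ (Finset.inter_subset_right (s₁ := F) (s₂ := G))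
      (mem_complexIdeal.1 hr₂ G hG)
    convert! Ideal.sub_mem _ e₂ e₁ using 1
    ring
  have hprime : ∀ F ∈ T₁, ∀ G ∈ T₂, (F ∩ G).Nonempty → r₁ - r₂ ∈ faceIdeal K (F ∩ G) :=
    fun F hF G hG hne => ((isPrime_faceIdeal _).mem_or_mem (hmul F hF G hG)).resolve_left
      (esymm_one_notMem_faceIdeal hne)
  have hmem : r₁ - r₂ ∈ complexIdeal K T₁ ⊔ complexIdeal K T₂ := by
    refine mem_sup_complexIdeal fun F hF G hG => ?_
    by_cases hne : (F ∩ G).Nonempty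
    · exact hprime F hF G hG hne
    -- if `F` and `G` are disjoint, `P_∅` contains `P_{F' ∩ G'}` for a pair that does meet
    · obtain ⟨F', hF', G', hG', hne'⟩ := hmeet
      rw [Finset.not_nonempty_iff_eq_empty.1 hne]
      exact Ideal.span_mono (Set.image_mono fun i _ => Finset.notMem_empty i)
        (hprime F' hF' G' hG' hne')
  obtain ⟨d₁, hd₁, d₂, hd₂, hd⟩ := Submodule.mem_sup.1 hmem
  refine ⟨r₁ - d₁, (hunion _).2 ⟨?_, ?_⟩⟩
  · convert! Ideal.add_mem _ hr₁ (Ideal.mul_mem_left _ (esymm (Fin n) K 1) hd₁) using 1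
    ring
  · rw [show r₁ - d₁ = r₂ + d₂ by linear_combination -hd]
    convert! Ideal.sub_mem _ hr₂ (Ideal.mul_mem_left _ (esymm (Fin n) K 1) hd₂) using 1
    ring

theorem EsymmTwoRegular.star (v : Fin n) (T : Finset (Finset (Fin n)))
    (hT : ∀ F ∈ T, v ∈ F ∧ 2 ≤ F.card) : EsymmTwoRegular K T := by
  induction T using Finset.induction_on with
  | empty => exact fun p q _ => ⟨0, by simp [complexIdeal]⟩
  | insert F T _ ih =>
    have hF := hT F (Finset.mem_insert_self _ _)
    have ih := ih fun G hG => hT G (Finset.mem_insert_of_mem hG)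
    obtain rfl | ⟨G, hG⟩ := T.eq_empty_or_nonempty
    · exact EsymmTwoRegular.singleton hF.2
    · rw [Finset.insert_eq]
      exact (EsymmTwoRegular.singleton hF.2).union ih ⟨F, Finset.mem_singleton_self _, G, hG, v,
        Finset.mem_inter.2 ⟨hF.1, (hT G (Finset.mem_insert_of_mem hG)).1⟩⟩

theorem isRegular_esymm {I : Ideal (MvPolynomial (Fin n) K)} {T : Finset (Finset (Fin n))}
    (hI : I = complexIdeal K T) (hne : ∀ F ∈ T, F.Nonempty) (hT : T.Nonempty)
    (hreg : EsymmTwoRegular K T) :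
    RingTheory.Sequence.IsRegular (MvPolynomial (Fin n) K ⧸ I)
      [esymm (Fin n) K 1, esymm (Fin n) K 2] := by
  subst hI
  rw [RingTheory.Sequence.isRegular_iff]
  constructor
  · rw [RingTheory.Sequence.isWeaklyRegular_cons_iff,
      RingTheory.Sequence.isWeaklyRegular_singleton_iff]
    constructor
    · rw [isSMulRegular_iff_right_eq_zero_of_smul]
      intro x hx
      obtain ⟨p, rfl⟩ := Ideal.Quotient.mk_surjective x
      rw [← Ideal.Quotient.mk_eq_mk, ← Submodule.Quotient.mk_smul, Submodule.Quotient.mk_eq_zero] at hx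
      exact Ideal.Quotient.eq_zero_iff_mem.2 (mem_complexIdeal_of_esymm_one_mul hne hx)
    · rw [isSMulRegular_iff_right_eq_zero_of_smul]
      intro x hx
      obtain ⟨y, rfl⟩ := Submodule.Quotient.mk_surjective _ x
      obtain ⟨p, rfl⟩ := Ideal.Quotient.mk_surjective y
      rw [← Submodule.Quotient.mk_smul, Submodule.Quotient.mk_eq_zero] at hx
      obtain ⟨w, -, hw⟩ := (Submodule.mem_smul_pointwise_iff_exists _ _ _).1 hx
      obtain ⟨q, rfl⟩ := Ideal.Quotient.mk_surjective w
      have hw' : esymm (Fin n) K 2 * p - esymm (Fin n) K 1 * q ∈ complexIdeal K T := by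
        rw [← Ideal.Quotient.eq]
        exact hw.symm
      obtain ⟨r, hr⟩ := hreg p q hw'
      rw [Submodule.Quotient.mk_eq_zero, Ideal.Quotient.eq.2 hr]
      exact Submodule.smul_mem_pointwise_smul (Ideal.Quotient.mk _ r) _ ⊤ trivial
  · intro htop
    obtain ⟨F, hF⟩ := hT
    have hle : Ideal.ofList [esymm (Fin n) K 1, esymm (Fin n) K 2] ≤ faceIdeal K ∅ := by
      rw [Ideal.ofList, Ideal.span_le]
      intro x hx
      simp only [List.mem_cons, List.not_mem_nil, or_false, Set.mem_ofPred_eq] at hx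
      rcases hx with rfl | rfl
      · exact esymm_mem_faceIdeal_empty le_rfl
      · exact esymm_mem_faceIdeal_empty one_le_two
    have hI : complexIdeal K T ≤ faceIdeal K ∅ := fun p hp =>
      Ideal.span_mono (Set.image_mono fun i _ => Finset.notMem_empty i)
        (mem_complexIdeal.1 hp F hF)
    have hsub : Ideal.ofList [esymm (Fin n) K 1, esymm (Fin n) K 2] •
        (⊤ : Submodule _ (MvPolynomial (Fin n) K ⧸ complexIdeal K T)) ≤
        Submodule.map (complexIdeal K T).mkQ (faceIdeal K ∅) := by
      rw [Submodule.smul_le]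
      intro r hr x _
      obtain ⟨p, rfl⟩ := Submodule.mkQ_surjective _ x
      exact ⟨r * p, Ideal.mul_mem_right _ _ (hle hr), by rw [← smul_eq_mul, map_smul]⟩
    rw [← htop] at hsub
    obtain ⟨p, hp, hp1⟩ := hsub (x := (complexIdeal K T).mkQ 1) trivial
    have : p - 1 ∈ complexIdeal K T := Ideal.Quotient.eq.1 hp1
    refine (isPrime_faceIdeal (K := K) (∅ : Finset (Fin n))).ne_top
      ((Ideal.eq_top_iff_one _).2 ?_)
    simpa using! Ideal.sub_mem _ hp (hI this)

/-- `S/P_F` has dimension at most `|F|`: it is a quotient of a polynomial ring on `F`. -/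
theorem coheight_faceIdeal_le (F : Finset (Fin n)) :
    Order.coheight (⟨faceIdeal K F, isPrime_faceIdeal F⟩ : PrimeSpectrum (MvPolynomial (Fin n) K))
      ≤ F.card := by
  have hdim : ringKrullDim (MvPolynomial (Fin n) K ⧸ faceIdeal K F) ≤ F.card := by
    let g : MvPolynomial F K →ₐ[K] MvPolynomial (Fin n) K ⧸ faceIdeal K F :=
      aeval fun i => Ideal.Quotient.mk _ (X i.1)
    have hg : Function.Surjective g := by
      let h : MvPolynomial (Fin n) K →ₐ[K] MvPolynomial F K :=
        aeval fun i => if hi : i ∈ F then X ⟨i, hi⟩ else 0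
      have hgh : g.comp h = Ideal.Quotient.mkₐ K (faceIdeal K F) := by
        ext i
        by_cases hi : i ∈ F
        · simp [g, h, hi]
        · simpa [g, h, hi] using!
            (Ideal.Quotient.eq_zero_iff_mem.2 (X_mem_faceIdeal (K := K).2 hi)).symm
      intro x
      obtain ⟨p, rfl⟩ := Ideal.Quotient.mkₐ_surjective K _ x
      exact ⟨h p, by rw [← hgh]; rfl⟩
    refine (ringKrullDim_le_of_surjective g.toRingHom hg).trans ?_
    rw [MvPolynomial.ringKrullDim_of_isNoetherianRing, ringKrullDim_eq_zero_of_field]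
    simp
  rw [ringKrullDim_quotient] at hdim
  have : ((Order.coheight (⟨faceIdeal K F, isPrime_faceIdeal F⟩ :
      PrimeSpectrum (MvPolynomial (Fin n) K)) : ℕ∞) : WithBot ℕ∞) ≤ F.card := by
    rw [Order.coheight_eq_krullDim_Ici]
    exact hdim
  exact_mod_cast this

end FaceIdeals

/-! ### The independence complex of a lexsegment graph -/

section LexSegment

variable {n i j k : ℕ}

/-- The generator `x_{a+1} x_{b+1}` belongs to `L(x_1 x_i, x_j x_k)`, with `a < b`. The vertices
`a`, `b` count from `0`, whereas `i`, `j`, `k` count from `1`. -/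
def LexEdge (i j k : ℕ) (a b : Fin n) : Prop :=
  a < b ∧ lexGE (1, i) (a + 1, b + 1) ∧ lexGE (a + 1, b + 1) (j, k)

theorem mem_lexSegIdeal {K : Type} [Field K] {p : MvPolynomial (Fin n) K} :
    p ∈ lexSegIdeal K n (1, i) (j, k) ↔
      ∀ m ∈ p.support, ∃ a b : Fin n, LexEdge i j k a b ∧ a ∈ m.support ∧ b ∈ m.support := by
  have hset : (fun w : ℕ × ℕ => xv K n w.1 * xv K n w.2) '' lexSegSet n (1, i) (j, k) =
      (fun s => monomial s (1 : K)) ''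
        {s : Fin n →₀ ℕ | ∃ a b : Fin n, LexEdge i j k a b ∧
          s = Finsupp.single a 1 + Finsupp.single b 1} := by
    ext q
    constructor
    · rintro ⟨⟨a, b⟩, ⟨⟨ha, hab, hb⟩, h₁, h₂⟩, rfl⟩
      dsimp only at ha hab hb
      obtain ⟨a, rfl⟩ := Nat.exists_eq_add_of_le' ha
      obtain ⟨b, rfl⟩ := Nat.exists_eq_add_of_le' (ha.trans hab.le)
      refine ⟨_, ⟨⟨a, by omega⟩, ⟨b, by omega⟩, ⟨?_, h₁, h₂⟩, rfl⟩, ?_⟩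
      · exact Fin.mk_lt_mk.2 (by omega)
      · simp only [xv, Nat.add_sub_cancel]
        rw [dif_pos (by omega), dif_pos (by omega), X, X, monomial_mul, one_mul]
    · rintro ⟨_, ⟨a, b, ⟨hab, h₁, h₂⟩, rfl⟩, rfl⟩
      refine ⟨(a + 1, b + 1), ⟨⟨?_, ?_, ?_⟩, h₁, h₂⟩, ?_⟩
      · simp
      · simpa using hab
      · exact b.2
      · simp only [xv, Nat.add_sub_cancel]
        rw [dif_pos a.2, dif_pos b.2, X, X, monomial_mul, one_mul]
  rw [lexSegIdeal, hset, mem_ideal_span_monomial_image]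
  refine forall₂_congr fun m _ => ?_
  constructor
  · rintro ⟨_, ⟨a, b, hab, rfl⟩, hle⟩
    have hne : a ≠ b := hab.1.ne
    refine ⟨a, b, hab, ?_, ?_⟩
    · have := hle a
      simp [hne.symm] at this ⊢
      omega
    · have := hle b
      simp [hne] at this ⊢
      omega
  · rintro ⟨a, b, hab, ha, hb⟩
    have hne : a ≠ b := hab.1.ne
    refine ⟨_, ⟨a, b, hab, rfl⟩, fun c => ?_⟩
    rw [Finsupp.mem_support_iff] at ha hb
    by_cases hca : c = a
    · subst hca
      simp [hne.symm]
      omega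
    · by_cases hcb : c = b
      · subst hcb
        simp [hne]
        omega
      · simp [Ne.symm hca, Ne.symm hcb]

open Classical in
/-- The faces with at least two vertices, one of them `v`, of the independence complex of the
lexsegment graph. -/
noncomputable def facesThrough (i j k : ℕ) (v : Fin n) : Finset (Finset (Fin n)) :=
  {F | (v ∈ F ∧ 2 ≤ F.card) ∧ ∀ a ∈ F, ∀ b ∈ F, ¬ LexEdge i j k a b}

theorem mem_facesThrough {v : Fin n} {F : Finset (Fin n)} :
    F ∈ facesThrough i j k v ↔
      (v ∈ F ∧ 2 ≤ F.card) ∧ ∀ a ∈ F, ∀ b ∈ F, ¬ LexEdge i j k a b := by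
  simp [facesThrough]

theorem pair_mem_facesThrough {v a b : Fin n} (hv : v ∈ ({a, b} : Finset (Fin n))) (hab : a < b)
    (h : ¬ LexEdge i j k a b) : {a, b} ∈ facesThrough i j k v := by
  refine mem_facesThrough.2 ⟨⟨hv, (Finset.card_pair hab.ne).ge⟩, ?_⟩
  intro c hc d hd hcd
  have := hcd.1
  simp only [Finset.mem_insert, Finset.mem_singleton] at hc hd
  rcases hc with rfl | rfl <;> rcases hd with rfl | rfl
  · exact lt_irrefl _ this
  · exact h hcd
  · exact lt_asymm this hab
  · exact lt_irrefl _ this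

theorem lexEdge_iff {a b : Fin n} :
    LexEdge i j k a b ↔ (a : ℕ) < b ∧ ((a : ℕ) = 0 → i ≤ b + 1) ∧
      ((a : ℕ) + 1 < j ∨ (a : ℕ) + 1 = j ∧ (b : ℕ) + 1 ≤ k) := by
  simp only [LexEdge, lexGE, Fin.lt_def]
  omega

theorem not_lexEdge_zero {h0 : 0 < n} {a : Fin n} (ha : (a : ℕ) + 1 < i) :
    ¬ LexEdge i j k ⟨0, h0⟩ a := fun h => by
  have := (lexEdge_iff.1 h).2.1 rfl
  omega

/-- The stars of `x_1` and `x_n` meet in a vertex `c` other than these two: `c = x_j` if `k < n`,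
and `c = x_{j+1}` if `k = n`. -/
theorem exists_hinge (hi3 : 3 ≤ i) (hin : i ≤ n) (hj : 3 ≤ j) (hjk : j < k) (hkn : k ≤ n)
    (hv : lexGT (j, k) (i - 1, n)) :
    ∃ c : Fin n, (⟨0, by omega⟩ : Fin n) < c ∧ c < ⟨n - 1, by omega⟩ ∧
      ¬ LexEdge i j k ⟨0, by omega⟩ c ∧ ¬ LexEdge i j k c ⟨n - 1, by omega⟩ := by
  simp only [lexGT] at hv
  by_cases hk : k < n
  · refine ⟨⟨j - 1, by omega⟩, Fin.mk_lt_mk.2 (by omega), Fin.mk_lt_mk.2 (by omega),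
      not_lexEdge_zero (by simp only; omega), fun h => ?_⟩
    have := lexEdge_iff.1 h
    simp only at this
    omega
  · refine ⟨⟨j, by omega⟩, Fin.mk_lt_mk.2 (by omega), Fin.mk_lt_mk.2 (by omega),
      not_lexEdge_zero (by simp only; omega), fun h => ?_⟩
    have := lexEdge_iff.1 h
    simp only at this
    omega

/-- Every face of the independence complex, the empty one included, extends to a face with at least
two vertices through `x_1` or `x_n`. -/
theorem exists_face_superset (hi3 : 3 ≤ i) (hin : i ≤ n) (hj : 3 ≤ j) (hjk : j < k) (hkn : k ≤ n)
    (hv : lexGT (j, k) (i - 1, n)) (σ : Finset (Fin n))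
    (hσ : ∀ a ∈ σ, ∀ b ∈ σ, ¬ LexEdge i j k a b) :
    ∃ F ∈ facesThrough i j k (⟨0, by omega⟩ : Fin n) ∪
      facesThrough i j k (⟨n - 1, by omega⟩ : Fin n), σ ⊆ F := by
  obtain ⟨c, h0c, hcn, h0c', hcn'⟩ := exists_hinge hi3 hin hj hjk hkn hv
  simp only [lexGT] at hv
  have hpair : ∀ a : Fin n, 0 < (a : ℕ) → σ ⊆ {a} →
      ¬ LexEdge i j k (⟨0, by omega⟩ : Fin n) a →
      ∃ F ∈ facesThrough i j k (⟨0, by omega⟩ : Fin n) ∪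
        facesThrough i j k (⟨n - 1, by omega⟩ : Fin n), σ ⊆ F := by
    intro a ha hsub hedge
    refine ⟨{⟨0, by omega⟩, a}, Finset.mem_union_left _
      (pair_mem_facesThrough (by simp) (Fin.lt_def.2 ha) hedge), hsub.trans (by simp)⟩
  by_cases h0 : (⟨0, by omega⟩ : Fin n) ∈ σ
  · by_cases hcard : 2 ≤ σ.card
    · exact ⟨σ, Finset.mem_union_left _ (mem_facesThrough.2 ⟨⟨h0, hcard⟩, hσ⟩), subset_rfl⟩
    · refine ⟨{⟨0, by omega⟩, c}, Finset.mem_union_left _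
        (pair_mem_facesThrough (by simp) h0c h0c'), fun x hx => ?_⟩
      have := Finset.card_le_one.1 (by omega : σ.card ≤ 1) x hx _ h0
      simp [this]
  have hpos : ∀ a ∈ σ, 0 < (a : ℕ) := by
    intro a ha
    refine Nat.pos_of_ne_zero fun h => h0 ?_
    convert ha
    exact h.symm
  -- such an `a` is adjacent to every vertex other than `0`, so `σ = {a}`
  by_cases hB : ∃ a ∈ σ, (a : ℕ) + 1 < j ∨ (a : ℕ) + 1 = j ∧ k = n
  · obtain ⟨a, ha, haj⟩ := hB
    refine hpair a (hpos a ha) (fun b hb => ?_) ?_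
    · rw [Finset.mem_singleton]
      have h₁ := hσ a ha b hb
      have h₂ := hσ b hb a ha
      have := hpos a ha
      have := hpos b hb
      have := b.2
      rw [lexEdge_iff] at h₁ h₂
      ext
      omega
    · exact not_lexEdge_zero (by omega)
  -- no vertex of `σ` is adjacent to the last vertex, which can therefore be added
  push Not at hB
  by_cases hcard : 2 ≤ (insert (⟨n - 1, by omega⟩ : Fin n) σ).card
  · refine ⟨_, Finset.mem_union_right _ (mem_facesThrough.2
      ⟨⟨Finset.mem_insert_self _ _, hcard⟩, ?_⟩), Finset.subset_insert _ _⟩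
    intro a ha b hb hab
    have hab' := lexEdge_iff.1 hab
    have hbn := b.2
    rw [Finset.mem_insert, Fin.ext_iff] at ha hb
    have haσ : a ∈ σ := ha.resolve_left fun h => by simp only at h; omega
    have hBa := hB a haσ
    have hbσ : b ∈ σ := hb.resolve_left fun h => by simp only at h; omega
    exact hσ a haσ b hbσ hab
  · refine ⟨{c, ⟨n - 1, by omega⟩}, Finset.mem_union_right _
        (pair_mem_facesThrough (by simp) hcn hcn'), fun x hx => ?_⟩
    have := Finset.card_le_one.1 (by omega : (insert (⟨n - 1, by omega⟩ : Fin n) σ).card ≤ 1) x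
      (Finset.mem_insert_of_mem hx) _ (Finset.mem_insert_self _ _)
    simp [this]

theorem lexSegIdeal_eq_complexIdeal (K : Type) [Field K] (hi3 : 3 ≤ i) (hin : i ≤ n) (hj : 3 ≤ j)
    (hjk : j < k) (hkn : k ≤ n) (hv : lexGT (j, k) (i - 1, n)) :
    lexSegIdeal K n (1, i) (j, k) = complexIdeal K
      (facesThrough i j k (⟨0, by omega⟩ : Fin n) ∪
        facesThrough i j k (⟨n - 1, by omega⟩ : Fin n)) := by
  ext p
  simp only [mem_lexSegIdeal, mem_complexIdeal, mem_faceIdeal]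
  constructor
  · intro h F hF m hm hmF
    obtain ⟨a, b, hab, ha, hb⟩ := h m hm
    have hF' : ∀ a ∈ F, ∀ b ∈ F, ¬ LexEdge i j k a b := by
      rcases Finset.mem_union.1 hF with hF | hF <;> exact (mem_facesThrough.1 hF).2
    exact hF' a (hmF ha) b (hmF hb) hab
  · intro h m hm
    by_contra! hcon
    obtain ⟨F, hF, hsub⟩ := exists_face_superset hi3 hin hj hjk hkn hv m.support
      fun a ha b hb hab => hcon a b hab ha hb
    exact h F hF m hm hsub

theorem esymmTwoRegular_faces (K : Type) [Field K] (hi3 : 3 ≤ i) (hin : i ≤ n) (hj : 3 ≤ j)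
    (hjk : j < k) (hkn : k ≤ n) (hv : lexGT (j, k) (i - 1, n)) :
    EsymmTwoRegular K (facesThrough i j k (⟨0, by omega⟩ : Fin n) ∪
        facesThrough i j k (⟨n - 1, by omega⟩ : Fin n)) := by
  obtain ⟨c, h0c, hcn, h0c', hcn'⟩ := exists_hinge hi3 hin hj hjk hkn hv
  refine (EsymmTwoRegular.star _ _ fun F hF => (mem_facesThrough.1 hF).1).union
    (EsymmTwoRegular.star _ _ fun F hF => (mem_facesThrough.1 hF).1)
    ⟨_, pair_mem_facesThrough (by simp) h0c h0c', _, pair_mem_facesThrough (by simp) hcn hcn',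
      c, by simp⟩

/-- The annihilator of `x_2` in `S/I` is the prime `(x_3, …, x_n)`: because `j ≥ 3`, the vertex
`x_2` is adjacent to all of `x_3, …, x_n`, and because `i ≥ 3` it is not adjacent to `x_1`. -/
theorem length_le_two {K : Type} [Field K] (hi3 : 3 ≤ i) (hin : i ≤ n) (hj : 3 ≤ j)
    (rs : List (MvPolynomial (Fin n) K))
    (hmem : ∀ a ∈ rs, a ∈ Ideal.span (Set.range (X : Fin n → MvPolynomial (Fin n) K)))
    (hreg : RingTheory.Sequence.IsWeaklyRegular
      (MvPolynomial (Fin n) K ⧸ lexSegIdeal K n (1, i) (j, k)) rs) : rs.length ≤ 2 := by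
  let v₀ : Fin n := ⟨0, by omega⟩
  let v₁ : Fin n := ⟨1, by omega⟩
  have h01 : v₀ ≠ v₁ := by simp [v₀, v₁]
  have hspan : Ideal.span (Set.range (X : Fin n → MvPolynomial (Fin n) K)) = faceIdeal K ∅ := by
    simp [faceIdeal]
  rw [hspan] at hmem
  have hle : faceIdeal K {v₀, v₁} ≤ faceIdeal K (∅ : Finset (Fin n)) :=
    Ideal.span_mono (Set.image_mono fun i _ => Finset.notMem_empty i)
  have hI : lexSegIdeal K n (1, i) (j, k) ≤ faceIdeal K {v₀, v₁} := by
    intro p hp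
    rw [mem_lexSegIdeal] at hp
    rw [mem_faceIdeal]
    intro m hm hsub
    obtain ⟨a, b, hab, ha, hb⟩ := hp m hm
    have ha := hsub ha
    have hb := hsub hb
    rw [lexEdge_iff] at hab
    simp only [Finset.mem_insert, Finset.mem_singleton, Fin.ext_iff, v₀, v₁] at ha hb
    omega
  have hann : ∀ r : MvPolynomial (Fin n) K,
      r • (Ideal.Quotient.mk (lexSegIdeal K n (1, i) (j, k)) (X v₁)) = 0 ↔
        r ∈ faceIdeal K {v₀, v₁} := by
    intro r
    have hsmul : r • (Ideal.Quotient.mk (lexSegIdeal K n (1, i) (j, k)) (X v₁)) =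
      Ideal.Quotient.mk (lexSegIdeal K n (1, i) (j, k)) (r * X v₁) := rfl
    rw [hsmul, Ideal.Quotient.eq_zero_iff_mem]
    constructor
    · intro h
      refine ((isPrime_faceIdeal _).mem_or_mem (hI h)).resolve_right fun h' => ?_
      exact X_mem_faceIdeal.1 h' (by simp)
    · intro h
      have hcolon : faceIdeal K {v₀, v₁} ≤
          Submodule.colon (lexSegIdeal K n (1, i) (j, k)) {X v₁} := by
        rw [faceIdeal, Ideal.span_le]
        rintro _ ⟨b, hb, rfl⟩
        rw [SetLike.mem_coe, Submodule.mem_colon_singleton, smul_eq_mul, mem_lexSegIdeal]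
        intro m hm
        rw [X, X, monomial_mul] at hm
        rw [Finset.mem_singleton.1 (support_monomial_subset hm)]
        refine ⟨v₁, b, ?_, by simp, by simp⟩
        have hb' : b ∉ ({v₀, v₁} : Finset (Fin n)) := hb
        rw [lexEdge_iff]
        simp only [Finset.mem_insert, Finset.mem_singleton, Fin.ext_iff, v₀, v₁] at hb' ⊢
        omega
      exact Submodule.mem_colon_singleton.1 (hcolon h)
  have key := length_le_coheight rs (MvPolynomial (Fin n) K ⧸ lexSegIdeal K n (1, i) (j, k))
    ⟨faceIdeal K {v₀, v₁}, isPrime_faceIdeal _⟩ _ hann (faceIdeal K ∅) hle hmem hreg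
  have := key.trans (coheight_faceIdeal_le _)
  rw [Finset.card_pair h01] at this
  exact_mod_cast this

end LexSegment

/-- For the lexsegment edge ideal `I = (L(x_1 x_i, x_j x_k))`
with `3 ≤ i ≤ n`, `3 ≤ j < k ≤ n`, `u >_lex v` and `v >_lex x_{i-1} x_n`,
one has `depth(S/I) = 2`. -/
theorem lexSegIdeal_depth_eq_two (K : Type) [Field K] (n i j k : ℕ)
    (hi3 : 3 ≤ i) (hin : i ≤ n) (hj : 3 ≤ j) (hjk : j < k) (hkn : k ≤ n)
    (huv : lexGT (1, i) (j, k)) (hv : lexGT (j, k) (i - 1, n)) :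
    smDepth K n (lexSegIdeal K n (1, i) (j, k)) = 2 := by
  refine IsGreatest.csSup_eq ⟨?_, ?_⟩
  · refine ⟨[esymm (Fin n) K 1, esymm (Fin n) K 2], rfl, ?_, ?_⟩
    · have hspan : Ideal.span (Set.range (X : Fin n → MvPolynomial (Fin n) K)) =
          faceIdeal K ∅ := by simp [faceIdeal]
      rw [hspan]
      intro a ha
      simp only [List.mem_cons, List.not_mem_nil, or_false] at ha
      rcases ha with rfl | rfl
      · exact esymm_mem_faceIdeal_empty le_rfl
      · exact esymm_mem_faceIdeal_empty one_le_two
    · refine isRegular_esymm (lexSegIdeal_eq_complexIdeal K hi3 hin hj hjk hkn hv) ?_ ?_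
        (esymmTwoRegular_faces K hi3 hin hj hjk hkn hv)
      · intro F hF
        rcases Finset.mem_union.1 hF with hF | hF <;>
          exact ⟨_, (mem_facesThrough.1 hF).1.1⟩
      · obtain ⟨F, hF, -⟩ := exists_face_superset hi3 hin hj hjk hkn hv ∅ (by simp)
        exact ⟨F, hF⟩
  · rintro r ⟨rs, rfl, hmem, hreg⟩
    exact length_le_two hi3 hin hj rs hmem hreg.toIsWeaklyRegular
end
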